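/- Let M be a compact connected boundaryless topological manifold of dimension n with a compatible metric and let f : M → M be an expansive homeomorphism such that the closure of Per_H^{n−1} equals M. Then the set 𝒮 of singularities of f (the points of M admitting no local product structure) is finite. -/

import Mathlib

open Metric Set

variable {M : Type*} [MetricSpace M]

/-- Iterates of a homeomorphism, indexed by `ℤ`. -/
def iterZ (f : M ≃ₜ M) (k : ℤ) (x : M) : M := (f.toEquiv ^ k) x

/-- `f` is expansive with expansivity constant `α`. -/
def IsExpansive (f : M ≃ₜ M) (α : ℝ) : Prop :=
  ∀ x y : M, x ≠ y → ∃ k : ℤ, α < dist (iterZ f k x) (iterZ f k y)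

/-- Stable set of `x`. -/
def Ws (f : M ≃ₜ M) (x : M) : Set M :=
  {y | Filter.Tendsto (fun k : ℤ => dist (iterZ f k x) (iterZ f k y)) Filter.atTop (nhds 0)}

/-- Unstable set of `x`. -/
def Wu (f : M ≃ₜ M) (x : M) : Set M :=
  {y | Filter.Tendsto (fun k : ℤ => dist (iterZ f k x) (iterZ f k y)) Filter.atBot (nhds 0)}

/-- Local (`ε`-local) stable set of `x`. -/
def WsLoc (f : M ≃ₜ M) (ε : ℝ) (x : M) : Set M :=
  {y | ∀ k : ℤ, 0 ≤ k → dist (iterZ f k x) (iterZ f k y) ≤ ε}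

/-- Local (`ε`-local) unstable set of `x`. -/
def WuLoc (f : M ≃ₜ M) (ε : ℝ) (x : M) : Set M :=
  {y | ∀ k : ℤ, k ≤ 0 → dist (iterZ f k x) (iterZ f k y) ≤ ε}

/-- The model space `ℝ^r × ℝ^{n-r}`. -/
abbrev ModelSp (n r : ℕ) := (Fin r → ℝ) × (Fin (n - r) → ℝ)

/-- The model hyperbolic linear map `L(a,b) = (a/2, 2b)`. -/
noncomputable def modelL (n r : ℕ) : ModelSp n r → ModelSp n r :=
  fun q => (fun i => q.1 i / 2, fun i => 2 * q.2 i)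

/-- Topologically hyperbolic periodic points of index `r` (`Per_H^r`). -/
def PerHr (f : M ≃ₜ M) (n r : ℕ) : Set M :=
  {p | ∃ l : ℕ, 1 ≤ l ∧ (f.toEquiv ^ l) p = p ∧
    ∃ (U : Set M) (V : Set (ModelSp n r)) (h : U ≃ₜ V),
      IsOpen U ∧ IsOpen V ∧ (0 : ModelSp n r) ∈ V ∧
      ∃ hp : p ∈ U, ((h ⟨p, hp⟩ : V) : ModelSp n r) = 0 ∧
        ∀ z : M, ∀ hz : z ∈ U, ∀ hz' : (f.toEquiv ^ l) z ∈ U,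
          ((h ⟨(f.toEquiv ^ l) z, hz'⟩ : V) : ModelSp n r) = modelL n r (h ⟨z, hz⟩)}

/-- All topologically hyperbolic periodic points (`Per_H`). -/
def PerH (f : M ≃ₜ M) (n : ℕ) : Set M := ⋃ r ∈ Finset.range (n + 1), PerHr f n r

/-- `p` admits a local product structure. -/
def AdmitsLPS (f : M ≃ₜ M) (n : ℕ) (p : M) : Prop :=
  ∃ (k : ℕ) (h : (Fin k → ℝ) × (Fin (n - k) → ℝ) → M) (ε : ℝ),
    0 < ε ∧ Topology.IsEmbedding h ∧ p ∈ Set.range h ∧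
    ∀ x : Fin k → ℝ, ∀ y : Fin (n - k) → ℝ,
      h '' ({x} ×ˢ univ) = WsLoc f ε (h (x, y)) ∩ Set.range h ∧
      h '' (univ ×ˢ {y}) = WuLoc f ε (h (x, y)) ∩ Set.range h

/-!
Near a point `z` take a small simply connected open set `B`. At each hyperbolic periodic point `q`
of `B` close to `z` the stable disc through `q` is a wall that separates `B` into two sides, because
circle-valued functions on `B` lift to `ℝ`, and a short unstable arc through `q` joins the two
sides. Cover the end points of all these arcs by finitely many small connected sets, the markers.
Recording the side on which each marker lies sorts the points `q` into finitely many types.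

The unstable arc at a point crosses the stable wall at every point of the same type, so any two
points in the closure of one type have a bracket. Let `x` and `y` be two points in the closures of
both of two types that differ by more than an exchange of the sides. If `y` were not in the local
stable set of `x`, then the brackets of the points of both types near `x` and `y` would be trapped
in connected sets that avoid the walls near `x`, and these bridges would force the two types to
agree up to an exchange of the sides. Hence the points without brackets nearby are covered by
finitely many sets of points with the same local stable set. They are invariant under `f⁻¹`, and
distinct points are not forward close after many applications of `f⁻¹`, so the pigeonhole principle
shows that there are only finitely many. At every other point, the brackets of a stable plaque and
an unstable plaque of a nearby hyperbolic point form a local product chart.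
-/

open Filter Topology Uniformity

/-! ### Forward closeness and expansivity -/

/-- Forward `ε`-closeness: `ForwardClose f ε x y` says that `y` lies in the local stable set
`WsLoc f ε x`. The local unstable sets are those of `ForwardClose f.symm`. -/
def ForwardClose (f : M ≃ₜ M) (ε : ℝ) (x y : M) : Prop :=
  ∀ k : ℕ, dist (f^[k] x) (f^[k] y) ≤ ε

/-- A radius `δ` below which forward `ε`-close points are automatically forward `ε / 2`-close. -/
def IsContractionScale (f : M ≃ₜ M) (ε δ : ℝ) : Prop :=
  ∀ ⦃x y : M⦄, ForwardClose f ε x y → dist x y < δ → ForwardClose f (ε / 2) x y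

section ForwardClose

variable {f : M ≃ₜ M} {α ε ε' : ℝ} {x y z : M}

namespace ForwardClose

lemma refl (hε : 0 ≤ ε) (x : M) : ForwardClose f ε x x := fun _ ↦ (dist_self _).trans_le hε

lemma symm (h : ForwardClose f ε x y) : ForwardClose f ε y x :=
  fun k ↦ (dist_comm _ _).trans_le (h k)

lemma trans (h : ForwardClose f ε x y) (h' : ForwardClose f ε' y z) :
    ForwardClose f (ε + ε') x z :=
  fun k ↦ (dist_triangle _ _ _).trans (add_le_add (h k) (h' k))

lemma mono (h : ForwardClose f ε x y) (hε : ε ≤ ε') : ForwardClose f ε' x y :=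
  fun k ↦ (h k).trans hε

lemma iterate (h : ForwardClose f ε x y) (k : ℕ) : ForwardClose f ε (f^[k] x) (f^[k] y) := by
  intro j
  simpa only [← Function.iterate_add_apply] using h (j + k)

end ForwardClose

lemma isClosed_setOf_forwardClose (f : M ≃ₜ M) (ε : ℝ) :
    IsClosed {p : M × M | ForwardClose f ε p.1 p.2} := by
  simp only [ForwardClose, ofPred_forall]
  refine isClosed_iInter fun k ↦ isClosed_le ?_ continuous_const
  have := f.continuous.iterate k
  fun_prop

lemma isClosed_setOf_forwardClose_right (f : M ≃ₜ M) (ε : ℝ) (x : M) :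
    IsClosed {y : M | ForwardClose f ε x y} :=
  (isClosed_setOf_forwardClose f ε).preimage (Continuous.prodMk_right x)

lemma iterZ_natCast (f : M ≃ₜ M) (k : ℕ) (x : M) : iterZ f k x = f^[k] x := by
  rw [iterZ, zpow_natCast, ← Equiv.Perm.iterate_eq_pow]
  rfl

lemma iterZ_neg_natCast (f : M ≃ₜ M) (k : ℕ) (x : M) : iterZ f (-k) x = f.symm^[k] x := by
  rw [iterZ, zpow_neg, zpow_natCast, ← inv_pow, ← Equiv.Perm.iterate_eq_pow]
  rfl

lemma mem_WsLoc_iff : y ∈ WsLoc f ε x ↔ ForwardClose f ε x y := by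
  refine ⟨fun h k ↦ ?_, fun h k hk ↦ ?_⟩
  · simpa only [iterZ_natCast] using h k (Int.natCast_nonneg k)
  · lift k to ℕ using hk
    simpa only [iterZ_natCast] using h k

lemma mem_WuLoc_iff : y ∈ WuLoc f ε x ↔ ForwardClose f.symm ε x y := by
  refine ⟨fun h k ↦ ?_, fun h k hk ↦ ?_⟩
  · simpa only [iterZ_neg_natCast] using h (-k) (by simp)
  · obtain ⟨m, rfl⟩ : ∃ m : ℕ, k = -m := ⟨k.natAbs, by omega⟩
    simpa only [iterZ_neg_natCast] using h m

lemma symm_iterate_iterate (f : M ≃ₜ M) (k : ℕ) (x : M) :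
    f.symm^[k] (f^[k] x) = x :=
  (Function.LeftInverse.iterate f.symm_apply_apply k) x

lemma iterate_symm_iterate (f : M ≃ₜ M) (k : ℕ) (x : M) :
    f^[k] (f.symm^[k] x) = x :=
  (Function.LeftInverse.iterate f.apply_symm_apply k) x

namespace IsExpansive

lemma eq_of_forwardClose (h : IsExpansive f α) (hs : ForwardClose f α x y)
    (hu : ForwardClose f.symm α x y) : x = y := by
  by_contra hne
  obtain ⟨k, hk⟩ := h x y hne
  rcases le_total 0 k with h0 | h0
  · exact hk.not_ge (mem_WsLoc_iff.2 hs k h0)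
  · exact hk.not_ge (mem_WuLoc_iff.2 hu k h0)

lemma symm (h : IsExpansive f α) : IsExpansive f.symm α := by
  intro x y hne
  obtain ⟨k, hk⟩ := h x y hne
  have (z : M) : iterZ f.symm (-k) z = iterZ f k z := by
    change ((f.toEquiv⁻¹) ^ (-k)) z = _
    rw [inv_zpow', neg_neg]
    rfl
  exact ⟨-k, by rwa [this, this]⟩

lemma eq_of_bracket (h : IsExpansive f α) (hε : 2 * ε ≤ α) {a b : M}
    (hxa : ForwardClose f ε x a) (hxb : ForwardClose f ε x b)
    (hya : ForwardClose f.symm ε y a) (hyb : ForwardClose f.symm ε y b) : a = b :=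
  h.eq_of_forwardClose ((hxa.symm.trans hxb).mono (by linarith))
    ((hya.symm.trans hyb).mono (by linarith))

lemma eventually_dist_iterate_lt [CompactSpace M] (h : IsExpansive f α) (hε : ε ≤ α) {η : ℝ}
    (hη : 0 < η) : ∀ᶠ k in atTop, ∀ x y, ForwardClose f ε x y → dist (f^[k] x) (f^[k] y) < η := by
  let K : Set (M × M) := {p | η ≤ dist p.1 p.2} ∩ {p | ForwardClose f ε p.1 p.2}
  have hK : IsCompact K :=
    ((isClosed_le continuous_const continuous_dist).inter
      (isClosed_setOf_forwardClose f ε)).isCompact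
  obtain ⟨t, ht⟩ := hK.elim_finite_subcover
    (fun j ↦ {p | α < dist (f.symm^[j] p.1) (f.symm^[j] p.2)})
    (fun j ↦ by
      have := f.symm.continuous.iterate j
      exact isOpen_lt continuous_const (by fun_prop))
    (fun p hp ↦ by
      by_contra hcon
      simp only [mem_iUnion, mem_ofPred_eq, not_exists, not_lt] at hcon
      have : p.1 = p.2 := h.eq_of_forwardClose (hp.2.mono hε) hcon
      exact hη.not_ge (hp.1.trans_eq (dist_eq_zero.2 this)))
  filter_upwards [(eventually_all_finset t).2 fun j _ ↦ eventually_ge_atTop j] with k hk x y hxy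
  by_contra! hcon
  obtain ⟨j, hjt, hj⟩ : ∃ j ∈ t, α < dist (f.symm^[j] (f^[k] x)) (f.symm^[j] (f^[k] y)) := by
    simpa using ht (show (f^[k] x, f^[k] y) ∈ K from ⟨hcon, hxy.iterate k⟩)
  obtain ⟨i, rfl⟩ := Nat.exists_eq_add_of_le (hk j hjt)
  simp only [Function.iterate_add_apply, symm_iterate_iterate] at hj
  exact (hε.trans_lt hj).not_ge (hxy i)

lemma exists_isContractionScale [CompactSpace M] (h : IsExpansive f α) (hε : ε ≤ α)
    (hε0 : 0 < ε) : ∃ δ > 0, IsContractionScale f ε δ := by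
  obtain ⟨N, hN⟩ := eventually_atTop.1 (h.eventually_dist_iterate_lt hε (half_pos hε0))
  have huc : ∀ᶠ p in 𝓤 M, ∀ k ∈ Finset.range N, dist (f^[k] p.1) (f^[k] p.2) < ε / 2 :=
    (eventually_all_finset _).2 fun k _ ↦
      CompactSpace.uniformContinuous_of_continuous (f.continuous.iterate k)
        (dist_mem_uniformity (half_pos hε0))
  obtain ⟨δ, hδ, hδN⟩ := mem_uniformity_dist.1 huc
  refine ⟨δ, hδ, fun x y hxy hd k ↦ ?_⟩
  rcases lt_or_ge k N with hk | hk
  · exact (hδN hd k (Finset.mem_range.2 hk)).le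
  · exact (hN k hk x y hxy).le

lemma eq_of_frequently_forwardClose [CompactSpace M] (h : IsExpansive f α) (hε : ε ≤ α)
    (hfreq : ∃ᶠ k in atTop, ForwardClose f ε (f.symm^[k] x) (f.symm^[k] y)) : x = y := by
  by_contra hne
  obtain ⟨k, hk, hlt⟩ := (hfreq.and_eventually
    (h.eventually_dist_iterate_lt hε (dist_pos.2 hne))).exists
  have := hlt _ _ hk
  simp only [iterate_symm_iterate, lt_self_iff_false] at this

end IsExpansive

end ForwardClose

/-! ### Linearizing charts -/

section IteratePullback

variable {Y : Type*} [TopologicalSpace Y] {f : M ≃ₜ M} {φ : OpenPartialHomeomorph M Y}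

lemma homeomorph_coe_pow (f : M ≃ₜ M) (k : ℕ) : ⇑(f ^ k) = f^[k] :=
  hom_coe_pow _ rfl (fun _ _ ↦ rfl) f k

/-- The chart `φ ∘ f^[k]`; with a linearizing chart `φ` at a point of period dividing `k`, it
extends `φ` along the stable plane. -/
noncomputable def iteratePullback (f : M ≃ₜ M) (k : ℕ) (φ : OpenPartialHomeomorph M Y) :
    OpenPartialHomeomorph M Y :=
  (f ^ k).transOpenPartialHomeomorph φ

lemma iteratePullback_apply (k : ℕ) (y : M) : iteratePullback f k φ y = φ (f^[k] y) :=
  congrArg φ (congrFun (homeomorph_coe_pow f k) y)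

lemma mem_source_iteratePullback {k : ℕ} {y : M} :
    y ∈ (iteratePullback f k φ).source ↔ f^[k] y ∈ φ.source := by
  rw [← homeomorph_coe_pow]
  rfl

lemma iterate_iteratePullback_symm (k : ℕ) (v : Y) :
    f^[k] ((iteratePullback f k φ).symm v) = φ.symm v := by
  rw [← homeomorph_coe_pow]
  exact (f ^ k).apply_symm_apply _

end IteratePullback

section StableChart

variable {E₁ E₂ : Type*} [TopologicalSpace E₁] [Zero E₁] [TopologicalSpace E₂] [Zero E₂]

/-- A chart at `q` whose plane `E₁ × {0}` contains the local stable set `WsLoc f ε q`, and in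
which every point of a strictly smaller local stable set is interior to that set relatively to the
plane. -/
structure StableChart (f : M ≃ₜ M) (ε : ℝ) (q : M)
    (φ : OpenPartialHomeomorph M (E₁ × E₂)) : Prop where
  mem_source : q ∈ φ.source
  map_eq_zero : φ q = 0
  mem_source_of_forwardClose : ∀ {y}, ForwardClose f ε q y → y ∈ φ.source
  snd_eq_zero : ∀ {y}, ForwardClose f ε q y → (φ y).2 = 0
  eventually_forwardClose : ∀ {ε' y}, ε' < ε → ForwardClose f ε' q y →
    ∀ᶠ v in 𝓝 (φ y).1, (v, (0 : E₂)) ∈ φ.target ∧ ForwardClose f ε q (φ.symm (v, 0))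

variable {f : M ≃ₜ M} {ε : ℝ} {q : M} {φ : OpenPartialHomeomorph M (E₁ × E₂)}

namespace StableChart

lemma symm_zero (h : StableChart f ε q φ) : φ.symm 0 = q := by
  rw [← h.map_eq_zero, φ.left_inv h.mem_source]

lemma map_eq (h : StableChart f ε q φ) {y : M} (hy : ForwardClose f ε q y) :
    φ y = ((φ y).1, 0) :=
  Prod.ext rfl (h.snd_eq_zero hy)

lemma symm_fst (h : StableChart f ε q φ) {y : M} (hy : ForwardClose f ε q y) :
    φ.symm ((φ y).1, 0) = y := by
  rw [← h.map_eq hy, φ.left_inv (h.mem_source_of_forwardClose hy)]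

end StableChart

end StableChart

section Linearization

variable {E₁ E₂ : Type*} [NormedAddCommGroup E₁] [NormedSpace ℝ E₁]
  [NormedAddCommGroup E₂] [NormedSpace ℝ E₂]

/-- A chart at a periodic point `q` in which `f^[l]` is the hyperbolic linear map
`(a, b) ↦ (a / 2, 2 b)`: topological hyperbolicity, with `E₁` the stable direction and `E₂` the
unstable one. -/
structure LinearizingChart (f : M ≃ₜ M) (l : ℕ) (q : M)
    (φ : OpenPartialHomeomorph M (E₁ × E₂)) : Prop where
  period_pos : 0 < l
  isPeriodicPt : Function.IsPeriodicPt f l q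
  mem_source : q ∈ φ.source
  map_eq_zero : φ q = 0
  map_iterate : ∀ z ∈ φ.source, f^[l] z ∈ φ.source →
    φ (f^[l] z) = ((2 : ℝ)⁻¹ • (φ z).1, (2 : ℝ) • (φ z).2)

variable {f : M ≃ₜ M} {α ε : ℝ} {q : M} {l : ℕ} {φ : OpenPartialHomeomorph M (E₁ × E₂)}

namespace LinearizingChart

lemma symm (h : LinearizingChart f l q φ) : LinearizingChart f.symm l q
    (φ.trans (Homeomorph.prodComm E₁ E₂).toOpenPartialHomeomorph) where
  period_pos := h.period_pos
  isPeriodicPt := (congrArg f.symm^[l] h.isPeriodicPt.eq).symm.trans (symm_iterate_iterate f l q)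
  mem_source := by simpa using h.mem_source
  map_eq_zero := by simp [h.map_eq_zero]
  map_iterate z hz hz' := by
    simp only [OpenPartialHomeomorph.trans_source, Homeomorph.toOpenPartialHomeomorph_source,
      preimage_univ, inter_univ] at hz hz'
    have hL := h.map_iterate _ hz' (by rwa [iterate_symm_iterate])
    rw [iterate_symm_iterate] at hL
    simp [hL, smul_smul, Prod.swap]

lemma symm_zero (h : LinearizingChart f l q φ) : φ.symm 0 = q := by
  rw [← h.map_eq_zero, φ.left_inv h.mem_source]

lemma zero_mem_target (h : LinearizingChart f l q φ) : (0 : E₁ × E₂) ∈ φ.target :=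
  h.map_eq_zero ▸ φ.map_source h.mem_source

lemma iterate_mul_self (h : LinearizingChart f l q φ) (j : ℕ) : f^[l * j] q = q :=
  h.isPeriodicPt.mul_const j

lemma map_iterate_mul (h : LinearizingChart f l q φ) {z : M} {j : ℕ}
    (hz : ∀ i ≤ j, f^[l * i] z ∈ φ.source) :
    φ (f^[l * j] z) = ((2 : ℝ)⁻¹ ^ j • (φ z).1, (2 : ℝ) ^ j • (φ z).2) := by
  induction j with
  | zero => simp
  | succ j ih =>
    have hmem := hz (j + 1) le_rfl
    rw [Nat.mul_succ, Nat.add_comm, Function.iterate_add_apply] at hmem ⊢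
    rw [h.map_iterate _ (hz j j.le_succ) hmem, ih fun i hi ↦ hz i (hi.trans j.le_succ)]
    simp only [smul_smul, pow_succ']

lemma eventually_map_iterate_mul (h : LinearizingChart f l q φ) (N : ℕ) :
    ∀ᶠ y in 𝓝 q, φ (f^[l * N] y) = ((2 : ℝ)⁻¹ ^ N • (φ y).1, (2 : ℝ) ^ N • (φ y).2) := by
  have hmem : ∀ᶠ y in 𝓝 q, ∀ i ∈ Finset.range (N + 1), f^[l * i] y ∈ φ.source := by
    refine (eventually_all_finset _).2 fun i _ ↦ (f.continuous.iterate _).continuousAt ?_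
    exact φ.open_source.mem_nhds (by rw [h.iterate_mul_self]; exact h.mem_source)
  filter_upwards [hmem] with y hy
  exact h.map_iterate_mul fun i hi ↦ hy i (Finset.mem_range.2 (Nat.lt_succ_of_le hi))

lemma snd_eq_zero_of_norm_iterate_le (h : LinearizingChart f l q φ) {z : M} {R : ℝ}
    (hz : ∀ j, f^[l * j] z ∈ φ.source) (hR : ∀ j, ‖φ (f^[l * j] z)‖ ≤ R) : (φ z).2 = 0 := by
  by_contra hne
  obtain ⟨j, hj⟩ := pow_unbounded_of_one_lt (R / ‖(φ z).2‖) (one_lt_two (α := ℝ))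
  have hle : ‖(φ (f^[l * j] z)).2‖ ≤ R := (norm_snd_le _).trans (hR j)
  rw [h.map_iterate_mul fun i _ ↦ hz i, norm_smul, norm_pow, Real.norm_ofNat] at hle
  rw [div_lt_iff₀ (norm_pos_iff.2 hne)] at hj
  exact hj.not_ge hle

lemma exists_ball_map_iterate (h : LinearizingChart f l q φ) (hε : 0 < ε) :
    ∃ r > 0, ∀ v : E₁, ‖v‖ < r → (v, (0 : E₂)) ∈ φ.target ∧
      f^[l] (φ.symm (v, 0)) = φ.symm ((2 : ℝ)⁻¹ • v, 0) ∧
      ∀ i ∈ Finset.range l, dist (f^[i] q) (f^[i] (φ.symm (v, 0))) < ε := by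
  have hlim (i : ℕ) : Tendsto (fun v : E₁ ↦ f^[i] (φ.symm (v, 0))) (𝓝 0) (𝓝 (f^[i] q)) := by
    have hφ : ContinuousAt φ.symm ((0 : E₁), (0 : E₂)) :=
      φ.symm.continuousAt h.zero_mem_target
    have := (f.continuous.iterate i).continuousAt.comp
      (hφ.comp (f := fun v : E₁ ↦ (v, (0 : E₂))) (by fun_prop))
    simpa only [ContinuousAt, Function.comp_def, Prod.mk_zero_zero, h.symm_zero] using this
  have htarget : ∀ᶠ v : E₁ in 𝓝 0, (v, (0 : E₂)) ∈ φ.target :=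
    (φ.open_target.preimage (Continuous.prodMk_left 0)).mem_nhds h.zero_mem_target
  have hsource : ∀ᶠ v : E₁ in 𝓝 0, f^[l] (φ.symm (v, 0)) ∈ φ.source :=
    hlim l (φ.open_source.mem_nhds (h.isPeriodicPt.eq.symm ▸ h.mem_source))
  have hclose : ∀ᶠ v : E₁ in 𝓝 0, ∀ i ∈ Finset.range l,
      dist (f^[i] q) (f^[i] (φ.symm (v, 0))) < ε :=
    (eventually_all_finset _).2 fun i _ ↦
      ((hlim i).eventually (ball_mem_nhds _ hε)).mono fun _ ↦ mem_ball'.1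
  obtain ⟨r, hr, hball⟩ := Metric.eventually_nhds_iff.1 (htarget.and (hsource.and hclose))
  refine ⟨r, hr, fun v hv ↦ ?_⟩
  obtain ⟨ht, hs, hc⟩ := hball (by simpa using hv)
  refine ⟨ht, ?_, hc⟩
  rw [← φ.left_inv hs, h.map_iterate _ (φ.map_target ht) hs, φ.right_inv ht, smul_zero]

lemma exists_ball_forwardClose (h : LinearizingChart f l q φ) (hε : 0 < ε) :
    ∃ r > 0, ∀ v : E₁, ‖v‖ < r →
      (v, (0 : E₂)) ∈ φ.target ∧ ForwardClose f ε q (φ.symm (v, 0)) := by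
  obtain ⟨r, hr, hball⟩ := h.exists_ball_map_iterate hε
  have hnorm (j : ℕ) {v : E₁} (hv : ‖v‖ < r) : ‖(2 : ℝ)⁻¹ ^ j • v‖ < r := by
    rw [norm_smul, norm_pow, norm_inv, Real.norm_ofNat]
    exact (mul_le_of_le_one_left (norm_nonneg v)
      (pow_le_one₀ (by norm_num) (by norm_num))).trans_lt hv
  have hiter (j : ℕ) {v : E₁} (hv : ‖v‖ < r) :
      f^[l * j] (φ.symm (v, 0)) = φ.symm ((2 : ℝ)⁻¹ ^ j • v, 0) := by
    induction j with
    | zero => simp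
    | succ j ih =>
      rw [Nat.mul_succ, Nat.add_comm, Function.iterate_add_apply, ih, (hball _ (hnorm j hv)).2.1,
        smul_smul, pow_succ']
  refine ⟨r, hr, fun v hv ↦ ⟨(hball v hv).1, fun k ↦ ?_⟩⟩
  rw [← Nat.mod_add_div k l, Function.iterate_add_apply, Function.iterate_add_apply,
    h.iterate_mul_self, hiter _ hv]
  exact ((hball _ (hnorm _ hv)).2.2 _ (Finset.mem_range.2 (Nat.mod_lt _ h.period_pos))).le

lemma exists_forall_iterate_mem [CompactSpace M] (h : LinearizingChart f l q φ)
    (hexp : IsExpansive f α) (hε : ε ≤ α) {U : Set M} (hU : U ∈ 𝓝 q) :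
    ∃ N, ∀ k ≥ N, ∀ y, ForwardClose f ε q y → f^[l * k] y ∈ U := by
  obtain ⟨η, hη, hηU⟩ := Metric.mem_nhds_iff.1 hU
  obtain ⟨N, hN⟩ := eventually_atTop.1 (hexp.eventually_dist_iterate_lt hε hη)
  refine ⟨N, fun k hk y hy ↦ hηU ?_⟩
  have := hN (l * k) (hk.trans (Nat.le_mul_of_pos_left k h.period_pos)) q y hy
  rwa [h.iterate_mul_self, dist_comm] at this

lemma forwardClose_of_iterate_mul (h : LinearizingChart f l q φ) {y : M} {N : ℕ}
    (hfin : ∀ k < l * N, dist (f^[k] q) (f^[k] y) ≤ ε) (hy : ForwardClose f ε q (f^[l * N] y)) :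
    ForwardClose f ε q y := by
  intro k
  rcases lt_or_ge k (l * N) with hk | hk
  · exact hfin k hk
  · obtain ⟨i, rfl⟩ := Nat.exists_eq_add_of_le' hk
    rw [Function.iterate_add_apply, Function.iterate_add_apply, h.iterate_mul_self]
    exact hy i

lemma eventually_forwardClose_iteratePullback (h : LinearizingChart f l q φ) {r ε' : ℝ} {N : ℕ}
    {y : M} (hball : ∀ v : E₁, ‖v‖ < r →
      (v, (0 : E₂)) ∈ φ.target ∧ ForwardClose f ε q (φ.symm (v, 0)))
    (hys : f^[l * N] y ∈ φ.source) (hyr : ‖φ (f^[l * N] y)‖ < r) (hy0 : (φ (f^[l * N] y)).2 = 0)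
    (hε' : ε' < ε) (hy : ForwardClose f ε' q y) :
    ∀ᶠ v in 𝓝 (φ (f^[l * N] y)).1, (v, (0 : E₂)) ∈ φ.target ∧
      ForwardClose f ε q ((iteratePullback f (l * N) φ).symm (v, 0)) := by
  set ψ := iteratePullback f (l * N) φ
  rw [← iteratePullback_apply] at hyr hy0 ⊢
  have hlim : Tendsto (fun v : E₁ ↦ ψ.symm (v, 0)) (𝓝 (ψ y).1) (𝓝 y) := by
    have hψy : ψ y = ((ψ y).1, 0) := Prod.ext rfl hy0
    have : Tendsto ψ.symm (𝓝 ((ψ y).1, 0)) (𝓝 y) :=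
      hψy ▸ ψ.tendsto_symm (mem_source_iteratePullback.2 hys)
    exact this.comp (Continuous.prodMk_left (0 : E₂)).continuousAt
  have hnorm : ∀ᶠ v in 𝓝 (ψ y).1, ‖v‖ < r :=
    continuous_norm.continuousAt.eventually (gt_mem_nhds ((norm_fst_le _).trans_lt hyr))
  have hfin : ∀ᶠ v in 𝓝 (ψ y).1, ∀ k ∈ Finset.range (l * N),
      dist (f^[k] q) (f^[k] (ψ.symm (v, 0))) < ε :=
    (eventually_all_finset _).2 fun k _ ↦
      (tendsto_const_nhds.dist (((f.continuous.iterate k).tendsto y).comp hlim)).eventually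
        (gt_mem_nhds ((hy k).trans_lt hε'))
  filter_upwards [hnorm, hfin] with v hv hvfin
  refine ⟨(hball v hv).1, h.forwardClose_of_iterate_mul
    (fun k hk ↦ (hvfin k (Finset.mem_range.2 hk)).le) ?_⟩
  rw [iterate_iteratePullback_symm]
  exact (hball v hv).2

lemma exists_stableChart [CompactSpace M] (h : LinearizingChart f l q φ)
    (hexp : IsExpansive f α) (hε : ε ≤ α) (hε0 : 0 < ε) :
    ∃ (φ' : OpenPartialHomeomorph M (E₁ × E₂)) (c₁ c₂ : ℝ), StableChart f ε q φ' ∧ 0 < c₁ ∧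
      0 < c₂ ∧ ∀ᶠ y in 𝓝 q, φ' y = (c₁ • (φ y).1, c₂ • (φ y).2) := by
  obtain ⟨r, hr, hball⟩ := h.exists_ball_forwardClose hε0
  have hU : ∀ᶠ y in 𝓝 q, y ∈ φ.source ∧ ‖φ y‖ < r :=
    (φ.open_source.eventually_mem h.mem_source).and
      ((φ.continuousAt h.mem_source).norm (gt_mem_nhds (by simpa [h.map_eq_zero] using hr)))
  obtain ⟨N, hN⟩ := h.exists_forall_iterate_mem hexp hε hU
  have hentry {y : M} (hy : ForwardClose f ε q y) (j : ℕ) :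
      f^[l * j] (f^[l * N] y) ∈ φ.source ∧ ‖φ (f^[l * j] (f^[l * N] y))‖ < r := by
    rw [← Function.iterate_add_apply, ← Nat.mul_add]
    exact hN (j + N) (Nat.le_add_left N j) y hy
  have hsnd {y : M} (hy : ForwardClose f ε q y) : (φ (f^[l * N] y)).2 = 0 :=
    h.snd_eq_zero_of_norm_iterate_le (fun j ↦ (hentry hy j).1) fun j ↦ (hentry hy j).2.le
  refine ⟨iteratePullback f (l * N) φ, 2⁻¹ ^ N, 2 ^ N, ?_, by positivity, by positivity, ?_⟩
  · constructor
    case mem_source => rw [mem_source_iteratePullback, h.iterate_mul_self]; exact h.mem_source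
    case map_eq_zero => rw [iteratePullback_apply, h.iterate_mul_self, h.map_eq_zero]
    case mem_source_of_forwardClose =>
      exact fun hy ↦ mem_source_iteratePullback.2 (hentry hy 0).1
    case snd_eq_zero => exact fun hy ↦ by rw [iteratePullback_apply, hsnd hy]
    case eventually_forwardClose =>
      intro ε' y hε' hy
      have hyε := hy.mono hε'.le
      rw [iteratePullback_apply]
      exact h.eventually_forwardClose_iteratePullback hball (hentry hyε 0).1 (hentry hyε 0).2
        (hsnd hyε) hε' hy
  · filter_upwards [h.eventually_map_iterate_mul N] with y hy
    rw [iteratePullback_apply, hy]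

end LinearizingChart

end Linearization

/-! ### Separation in simply connected spaces -/

/-- A space is locally simply connected if every point has arbitrarily small open simply connected
neighbourhoods. All manifolds are. -/
class LocallySimplyConnectedSpace (X : Type*) [TopologicalSpace X] : Prop where
  exists_isSimplyConnected_subset : ∀ (x : X), ∀ U ∈ 𝓝 x,
    ∃ B ⊆ U, IsOpen B ∧ x ∈ B ∧ IsSimplyConnected B

instance LocallySimplyConnectedSpace.toLocallyPathConnectedSpace (X : Type*)
    [TopologicalSpace X] [LocallySimplyConnectedSpace X] : LocallyPathConnectedSpace X where
  path_connected_basis x := by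
    refine ⟨fun U ↦ ⟨fun hU ↦ ?_, fun ⟨B, hB, hBU⟩ ↦ mem_of_superset hB.1 hBU⟩⟩
    obtain ⟨B, hBU, hB, hxB, hBs⟩ :=
      LocallySimplyConnectedSpace.exists_isSimplyConnected_subset x U hU
    exact ⟨B, ⟨hB.mem_nhds hxB, hBs.isPathConnected⟩, hBU⟩

instance (E : Type*) [NormedAddCommGroup E] [NormedSpace ℝ E] :
    LocallySimplyConnectedSpace E where
  exists_isSimplyConnected_subset x U hU := by
    obtain ⟨r, hr, hrU⟩ := Metric.mem_nhds_iff.1 hU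
    have := contractibleSpace_ball (x := x) hr
    exact ⟨ball x r, hrU, isOpen_ball, mem_ball_self hr,
      (inferInstance : SimplyConnectedSpace (ball x r))⟩

lemma locallySimplyConnectedSpace_of_chartedSpace (H X : Type*) [TopologicalSpace H]
    [LocallySimplyConnectedSpace H] [TopologicalSpace X] [ChartedSpace H X] :
    LocallySimplyConnectedSpace X where
  exists_isSimplyConnected_subset x U hU := by
    let φ := chartAt H x
    have hx : x ∈ φ.source := mem_chart_source H x
    have hφU : φ.target ∩ φ.symm ⁻¹' U ∈ 𝓝 (φ x) :=
      inter_mem (φ.open_target.mem_nhds (φ.map_source hx)) (φ.tendsto_symm hx hU)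
    obtain ⟨B, hBU, hB, hxB, hBs⟩ :=
      LocallySimplyConnectedSpace.exists_isSimplyConnected_subset _ _ hφU
    have hBt : B ⊆ φ.symm.source := hBU.trans inter_subset_left
    refine ⟨φ.symm '' B, image_subset_iff.2 fun y hy ↦ (hBU hy).2,
      φ.symm.isOpen_image_of_subset_source hB hBt, ⟨φ x, hxB, φ.left_inv hx⟩, ?_⟩
    have := hBs.simplyConnectedSpace
    let e := (φ.symm.homeomorphOfImageSubsetSource hBt rfl).symm
    exact e.toHomotopyEquiv.simplyConnectedSpace

section Separation

variable {X : Type*} [TopologicalSpace X] {C P Q : Set X} {q : X}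

lemma frontier_subset_union_compl (hQ : IsOpen Q) (hP : IsOpen P) (hPQ : Disjoint P Q) :
    frontier Q ⊆ C ∪ (C ∪ P ∪ Q)ᶜ := by
  rintro z ⟨hzQ, hzQ'⟩
  rw [hQ.interior_eq] at hzQ'
  have hzP : z ∉ P := fun h ↦ (hPQ.closure_right hP).notMem_of_mem_left h hzQ
  by_cases hzC : z ∈ C
  · exact Or.inl hzC
  · exact Or.inr (by simp [hzC, hzP, hzQ'])

-- `ψ` is half of an Urysohn function of `C`, with its sign changed on `Q`.
lemma exists_jump_across [NormalSpace X] (hC : IsClosed C) (hP : IsOpen P) (hQ : IsOpen Q)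
    (hPQ : Disjoint P Q) (hN : IsOpen (C ∪ P ∪ Q)) (hq : q ∈ C) :
    ∃ ψ : X → ℝ, ContinuousOn ψ Cᶜ ∧ Continuous (fun z ↦ (ψ z : AddCircle (1 : ℝ))) ∧
      (ψ q : AddCircle (1 : ℝ)) = (1 / 2 : ℝ) ∧
      ∀ᶠ y in 𝓝 q, (y ∈ P → 1 / 4 < ψ y) ∧ (y ∈ Q → ψ y < -1 / 4) := by
  classical
  obtain ⟨g, hg0, hg1, -⟩ := exists_continuous_zero_one_of_isClosed hN.isClosed_compl hC
    (disjoint_compl_left_iff_subset.2 (subset_union_left.trans subset_union_left))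
  have hfr := frontier_subset_union_compl (C := C) hQ hP hPQ
  have hhalf : ((-1 / 2 : ℝ) : AddCircle (1 : ℝ)) = (1 / 2 : ℝ) := by
    rw [← AddCircle.coe_add_period 1 (-1 / 2 : ℝ)]
    norm_num
  refine ⟨fun z ↦ if z ∈ Q then -g z / 2 else g z / 2, ?_, ?_, ?_, ?_⟩
  · refine ContinuousOn.if (fun z hz ↦ ?_) (by fun_prop) (by fun_prop)
    simp [hg0 ((hfr hz.2).resolve_left hz.1)]
  · simp only [apply_ite ((↑) : ℝ → AddCircle (1 : ℝ))]
    refine Continuous.if (fun z hz ↦ ?_) (by fun_prop) (by fun_prop)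
    rcases hfr hz with hzC | hzN
    · simpa only [hg1 hzC, Pi.one_apply] using hhalf
    · simp [hg0 hzN]
  · simp only [hg1 hq, Pi.one_apply]
    split_ifs
    exacts [hhalf, rfl]
  · have hg : ∀ᶠ y in 𝓝 q, 1 / 2 < g y :=
      g.continuous.continuousAt.eventually (lt_mem_nhds (by rw [hg1 hq]; norm_num))
    filter_upwards [hg] with y hy
    refine ⟨fun hyP ↦ ?_, fun hyQ ↦ ?_⟩
    · rw [if_neg (hPQ.notMem_of_mem_left hyP)]
      linarith
    · rw [if_pos hyQ]
      linarith

-- A circle-valued function making one full turn across `C` lifts to `ℝ`; the values of the lift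
-- relative to those of `ψ` tell the two sides of `C` apart globally.
lemma exists_isOpen_separation [NormalSpace X] [SimplyConnectedSpace X]
    [LocallyPathConnectedSpace X] (hC : IsClosed C) (hP : IsOpen P) (hQ : IsOpen Q)
    (hPQ : Disjoint P Q) (hN : IsOpen (C ∪ P ∪ Q)) (hq : q ∈ C) :
    ∃ S T : Set X, IsOpen S ∧ IsOpen T ∧ Disjoint S T ∧ S ∪ T = Cᶜ ∧
      ∀ᶠ y in 𝓝 q, y ∉ C → (y ∈ P → y ∈ S) ∧ (y ∈ Q → y ∈ T) := by
  obtain ⟨ψ, hψC, hψ, hψq, hψnear⟩ := exists_jump_across hC hP hQ hPQ hN hq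
  obtain ⟨F, ⟨hFq, hF⟩, -⟩ := (AddCircle.isCoveringMap_coe (1 : ℝ)).existsUnique_continuousMap_lifts
    ⟨_, hψ⟩ q (1 / 2) hψq.symm
  have hne (y : X) : F y - ψ y ≠ 1 / 2 := by
    have : ((F y - ψ y : ℝ) : AddCircle (1 : ℝ)) = 0 := by
      rw [AddCircle.coe_sub, sub_eq_zero]
      exact congrFun hF y
    obtain ⟨m, hm⟩ := (AddCircle.coe_eq_zero_iff _).1 this
    rw [← hm, zsmul_one]
    intro h
    have : 2 * m = 1 := by exact_mod_cast (by linarith : (2 * m : ℝ) = 1)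
    omega
  have hFψ : ContinuousOn (fun y ↦ F y - ψ y) Cᶜ := F.continuous.continuousOn.sub hψC
  refine ⟨Cᶜ ∩ (fun y ↦ F y - ψ y) ⁻¹' Iio (1 / 2), Cᶜ ∩ (fun y ↦ F y - ψ y) ⁻¹' Ioi (1 / 2),
    hFψ.isOpen_inter_preimage hC.isOpen_compl isOpen_Iio,
    hFψ.isOpen_inter_preimage hC.isOpen_compl isOpen_Ioi,
    Set.disjoint_left.2 fun y hS hT ↦ lt_asymm (a := F y - ψ y) hS.2 hT.2, ?_, ?_⟩
  · rw [← inter_union_distrib_left, inter_eq_left]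
    exact fun y _ ↦ lt_or_gt_of_ne (hne y)
  · have hFnear : ∀ᶠ y in 𝓝 q, F y ∈ Ioo (1 / 4) (3 / 4) :=
      F.continuous.continuousAt (by rw [hFq]; exact Ioo_mem_nhds (by norm_num) (by norm_num))
    filter_upwards [hFnear, hψnear] with y hFy hψy hyC
    refine ⟨fun hyP ↦ ⟨hyC, ?_⟩, fun hyQ ↦ ⟨hyC, ?_⟩⟩ <;>
      simp only [mem_preimage, mem_Iio, mem_Ioi]
    · linarith [hFy.2, hψy.1 hyP]
    · linarith [hFy.1, hψy.2 hyQ]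

lemma exists_isOpen_separation_of_isSimplyConnected [CompletelyNormalSpace X]
    [LocallyPathConnectedSpace X] (hB : IsOpen B) (hBs : IsSimplyConnected B) (hCB : C ⊆ B)
    (hC : IsClosed ((↑) ⁻¹' C : Set B)) (hP : IsOpen P) (hQ : IsOpen Q) (hPQ : Disjoint P Q)
    (hN : IsOpen (C ∪ P ∪ Q)) (hq : q ∈ C) :
    ∃ S T : Set X, IsOpen S ∧ IsOpen T ∧ Disjoint S T ∧ S ∪ T = B \ C ∧
      ∀ᶠ y in 𝓝 q, y ∉ C → (y ∈ P → y ∈ S) ∧ (y ∈ Q → y ∈ T) := by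
  have := hBs.simplyConnectedSpace
  have := hB.locallyPathConnectedSpace
  have hBval {U : Set X} (hU : IsOpen U) : IsOpen ((↑) ⁻¹' U : Set B) :=
    hU.preimage continuous_subtype_val
  obtain ⟨S, T, hS, hT, hST, hunion, hnear⟩ := exists_isOpen_separation (q := ⟨q, hCB hq⟩) hC
    (hBval hP) (hBval hQ) (hPQ.preimage _) (hBval hN) hq
  refine ⟨(↑) '' S, (↑) '' T, hB.isOpenMap_subtype_val _ hS, hB.isOpenMap_subtype_val _ hT,
    (disjoint_image_iff Subtype.val_injective).2 hST, ?_, ?_⟩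
  · rw [← image_union, hunion, ← preimage_compl, Subtype.image_preimage_coe, sdiff_eq]
  · rw [← map_nhds_subtype_coe_eq_nhds (hCB hq) (hB.eventually_mem (hCB hq)), eventually_map]
    filter_upwards [hnear] with y hy hyC
    exact ⟨fun h ↦ mem_image_of_mem _ ((hy hyC).1 h), fun h ↦ mem_image_of_mem _ ((hy hyC).2 h)⟩

lemma isPreconnected_union_of_union_eq_diff {S₁ S₂ : Set X} (hB : IsPreconnected B)
    (hC : IsPreconnected C) (hCB : C ⊆ B) (hCne : C.Nonempty) (hS₁ : IsOpen S₁)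
    (hS₂ : IsOpen S₂) (hS : Disjoint S₁ S₂) (hunion : S₁ ∪ S₂ = B \ C) :
    IsPreconnected (S₁ ∪ C) := by
  have hS₁B : S₁ ⊆ B := fun y hy ↦ (hunion.le (Or.inl hy)).1
  have of_subset {u v : Set X} (hu : IsOpen u) (hv : IsOpen v) (hcov : S₁ ∪ C ⊆ u ∪ v)
      (huv : (S₁ ∪ C) ∩ (u ∩ v) = ∅) (hCu : C ⊆ u) : S₁ ∪ C ⊆ u := by
    have hdisj : Disjoint (S₁ ∩ v) (S₂ ∪ u) := by
      rw [disjoint_union_right]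
      refine ⟨hS.mono_left inter_subset_left, Set.disjoint_left.2 fun y hy hyu ↦ ?_⟩
      exact huv.le ⟨Or.inl hy.1, hyu, hy.2⟩
    have hBcov : B ⊆ (S₁ ∩ v) ∪ (S₂ ∪ u) := fun y hy ↦ by
      by_cases hyC : y ∈ C
      · exact Or.inr (Or.inr (hCu hyC))
      · rcases hunion.ge ⟨hy, hyC⟩ with h | h
        · exact (hcov (Or.inl h)).symm.imp (fun hv ↦ ⟨h, hv⟩) Or.inr
        · exact Or.inr (Or.inl h)
    have hBu := hB.subset_right_of_subset_union (hS₁.inter hv) (hS₂.union hu) hdisj hBcov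
      (hCne.mono fun y hy ↦ ⟨hCB hy, Or.inr (hCu hy)⟩)
    exact union_subset (fun y hy ↦ (hBu (hS₁B hy)).resolve_left (hS.notMem_of_mem_left hy)) hCu
  rw [isPreconnected_iff_subset_of_disjoint]
  intro u v hu hv hcov huv
  rcases isPreconnected_iff_subset_of_disjoint.1 hC u v hu hv (subset_union_right.trans hcov)
    (subset_eq_empty (inter_subset_inter_left _ subset_union_right) huv) with h | h
  · exact Or.inl (of_subset hu hv hcov huv h)
  · exact Or.inr (of_subset hv hu (by rwa [union_comm v]) (by rwa [inter_comm v]) h)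

lemma isClosed_preimage_connectedComponentIn {K : Set X} (hK : IsClosed K) (B : Set X) (q : X) :
    IsClosed ((↑) ⁻¹' connectedComponentIn (K ∩ B) q : Set B) := by
  set D := connectedComponentIn (K ∩ B) q
  rw [Topology.IsInducing.subtypeVal.isClosed_iff]
  refine ⟨closure D, isClosed_closure, Subset.antisymm (fun y hy ↦ ?_) fun y hy ↦
    subset_closure hy⟩
  have hsub : D ⊆ K ∩ B := connectedComponentIn_subset (K ∩ B) q
  obtain ⟨c, hc⟩ : D.Nonempty := closure_nonempty_iff.1 ⟨_, hy⟩
  have hpre : IsPreconnected (insert (y : X) D) :=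
    isPreconnected_connectedComponentIn.subset_closure (subset_insert _ _)
      (insert_subset hy subset_closure)
  have hyK : (y : X) ∈ K ∩ B := ⟨closure_minimal (hsub.trans inter_subset_left) hK hy, y.2⟩
  have hyD := hpre.subset_connectedComponentIn (mem_insert_of_mem _ hc) (insert_subset hyK hsub)
    (mem_insert _ _)
  rwa [← connectedComponentIn_eq hc] at hyD

end Separation

/-! ### Separators -/

/-- A separator of `B` through `q`: a connected wall through `q`, relatively closed in `B`, whose
complement in `B` is split into two open sides, labelled by `Bool`. The last two conditions are
stated for both labels `b`, so that the two sides play symmetric roles. -/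
structure Separator {X : Type*} [TopologicalSpace X] (B : Set X) (q : X) where
  wall : Set X
  side : Bool → Set X
  isPreconnected_wall : IsPreconnected wall
  mem_wall : q ∈ wall
  wall_subset : wall ⊆ B
  isOpen_side : ∀ b, IsOpen (side b)
  disjoint_side : ∀ b, Disjoint (side b) (side !b)
  side_union_side : ∀ b, side b ∪ side (!b) = B \ wall

/-- A bridge from `C₁` to `C₂` in `B` avoiding `C`. -/
structure IsBridge {X : Type*} [TopologicalSpace X] (B W C C₁ C₂ : Set X) : Prop where
  isPreconnected : IsPreconnected W
  subset : W ⊆ B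
  disjoint : Disjoint W C
  left_nonempty : (W ∩ C₁).Nonempty
  right_nonempty : (W ∩ C₂).Nonempty

namespace Separator

variable {X : Type*} [TopologicalSpace X] {B A : Set X} {q q' r r' y : X} {a a' b : Bool}

/-- The same wall with the labels of the two sides exchanged. -/
def swap (d : Separator B q) : Separator B q where
  wall := d.wall
  side b := d.side !b
  isPreconnected_wall := d.isPreconnected_wall
  mem_wall := d.mem_wall
  wall_subset := d.wall_subset
  isOpen_side _ := d.isOpen_side _
  disjoint_side _ := d.disjoint_side _
  side_union_side _ := d.side_union_side _

lemma side_subset (d : Separator B q) (b : Bool) : d.side b ⊆ B := fun _ hy ↦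
  ((d.side_union_side b).le (Or.inl hy)).1

lemma exists_mem_side (d : Separator B q) (hy : y ∈ B) (hyw : y ∉ d.wall) : ∃ b, y ∈ d.side b :=
  ((d.side_union_side true).ge ⟨hy, hyw⟩).elim (⟨_, ·⟩) (⟨_, ·⟩)

lemma eq_of_mem_side (d : Separator B q) (ha : y ∈ d.side a) (hb : y ∈ d.side b) : a = b := by
  by_contra hne
  obtain rfl : b = !a := Bool.eq_not.2 (Ne.symm hne)
  exact (d.disjoint_side a).notMem_of_mem_left ha hb

lemma subset_side (d : Separator B q) (hA : IsPreconnected A) (hAB : A ⊆ B)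
    (hAw : Disjoint A d.wall) (hy : y ∈ A) (hya : y ∈ d.side a) : A ⊆ d.side a :=
  hA.subset_left_of_subset_union (d.isOpen_side a) (d.isOpen_side !a) (d.disjoint_side a)
    (fun _ hx ↦ (d.side_union_side a).ge ⟨hAB hx, hAw.notMem_of_mem_left hx⟩) ⟨y, hy, hya⟩

lemma wall_subset_side (d : Separator B q) (c : Separator B r) (h : Disjoint d.wall c.wall)
    (hy : y ∈ c.wall) (hya : y ∈ d.side a) : c.wall ⊆ d.side a :=
  d.subset_side c.isPreconnected_wall c.wall_subset h.symm hy hya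

lemma side_not_subset_side (hB : IsPreconnected B) (d : Separator B q) (c : Separator B r)
    (h : Disjoint d.wall c.wall) (hr : r ∈ d.side a) (hq : q ∈ c.side b) :
    d.side (!a) ⊆ c.side b := by
  have hpre : IsPreconnected (d.side (!a) ∪ d.wall) :=
    isPreconnected_union_of_union_eq_diff hB d.isPreconnected_wall d.wall_subset
      ⟨q, d.mem_wall⟩ (d.isOpen_side _) (d.isOpen_side _) (d.disjoint_side _)
      (d.side_union_side _)
  have hcd : c.wall ⊆ d.side a := d.wall_subset_side c h c.mem_wall hr
  refine subset_union_left.trans (c.subset_side hpre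
    (union_subset (d.side_subset _) d.wall_subset) ?_ (Or.inr d.mem_wall) hq)
  exact disjoint_union_left.2 ⟨((d.disjoint_side a).mono_left hcd).symm, h⟩

lemma mem_side_of_isBridge (d : Separator B q) (c : Separator B r) (c' : Separator B r')
    (hdc : Disjoint d.wall c.wall) (hdc' : Disjoint d.wall c'.wall) {W : Set X}
    (hW : IsBridge B W d.wall c.wall c'.wall) (hr : r ∈ d.side a) : r' ∈ d.side a := by
  obtain ⟨w, hwW, hwc⟩ := hW.left_nonempty
  obtain ⟨w', hwW', hwc'⟩ := hW.right_nonempty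
  have hw : w ∈ d.side a := d.wall_subset_side c hdc c.mem_wall hr hwc
  have hw' : w' ∈ d.side a := d.subset_side hW.isPreconnected hW.subset hW.disjoint hwW hw hwW'
  exact d.wall_subset_side c' hdc' hwc' hw' c'.mem_wall

/-- `d.Sorts V v`: the set `V j` lies entirely on the side `v j` of `d`, for all `j`. -/
def Sorts {ι : Type*} (d : Separator B q) (V : ι → Set X) (v : ι → Bool) : Prop :=
  ∀ j, V j ⊆ d.side (v j)

variable {ι : Type*} {V : ι → Set X} {v v' : ι → Bool}

lemma exists_sorts (d : Separator B q) (hVne : ∀ j, (V j).Nonempty)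
    (hV : ∀ j, IsPreconnected (V j)) (hVB : ∀ j, V j ⊆ B) (hVd : ∀ j, Disjoint (V j) d.wall) :
    ∃ v, d.Sorts V v := by
  have (j : ι) : ∃ b, V j ⊆ d.side b := by
    obtain ⟨y, hy⟩ := hVne j
    obtain ⟨b, hb⟩ := d.exists_mem_side (hVB j hy) ((hVd j).notMem_of_mem_left hy)
    exact ⟨b, d.subset_side (hV j) (hVB j) (hVd j) hy hb⟩
  exact ⟨_, fun j ↦ (this j).choose_spec⟩

namespace Sorts

lemma eq_of_mem {d : Separator B q} (h : d.Sorts V v) {j : ι} (hy : y ∈ V j)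
    (hyb : y ∈ d.side b) : v j = b :=
  d.eq_of_mem_side (h j hy) hyb

lemma eq_of_eq_not {d : Separator B q} {c : Separator B r} (hd : d.Sorts V v)
    (hc : c.Sorts V v') (hB : IsPreconnected B) (hVne : ∀ j, (V j).Nonempty)
    (hdc : Disjoint d.wall c.wall) (hr : r ∈ d.side a) (hq : q ∈ c.side b) {j : ι}
    (hj : v j = !a) : v' j = b := by
  obtain ⟨y, hy⟩ := hVne j
  exact hc.eq_of_mem hy (side_not_subset_side hB d c hdc hr hq (hj ▸ hd j hy))

lemma eq_not_of_isBridge {d : Separator B q} {c : Separator B r} {d' : Separator B q'}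
    {c' : Separator B r'} (hd : d.Sorts V v) (hc' : c'.Sorts V v') (hB : IsPreconnected B)
    (hVne : ∀ j, (V j).Nonempty) (hdc : Disjoint d.wall c.wall) (hdc' : Disjoint d.wall c'.wall)
    (hd'c' : Disjoint d'.wall c'.wall) {W U : Set X} (hW : IsBridge B W d.wall c.wall c'.wall)
    (hU : IsBridge B U c'.wall d'.wall d.wall) (hr : r ∈ d.side a) (hq' : q' ∈ c'.side !a')
    {j : ι} (hj : v j = !a) : v' j = !a' :=
  hd.eq_of_eq_not hc' hB hVne hdc' (d.mem_side_of_isBridge c c' hdc hdc' hW hr)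
    (c'.mem_side_of_isBridge d' d hd'c'.symm hdc'.symm hU hq') hj

end Sorts

end Separator

/-! ### Stable discs -/

section StableDisc

/-- The connected component of `q` in the part of its local stable set lying in `B`. -/
def stableDisc (f : M ≃ₜ M) (ε : ℝ) (B : Set M) (q : M) : Set M :=
  connectedComponentIn ({y | ForwardClose f ε q y} ∩ B) q

/-- The sign of the coordinate half-space that carries the label `b`. -/
def labelSign (b : Bool) : ℝ := bif b then 1 else -1

/-- The points of `B` whose projection to the stable plane of the chart `φ` lies in the stable disc
of `q` and whose transverse coordinate lies in `I`. -/
def stableBox {E : Type*} [TopologicalSpace E] (f : M ≃ₜ M) (ε : ℝ) (B : Set M) (q : M)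
    (φ : OpenPartialHomeomorph M (E × ℝ)) (I : Set ℝ) : Set M :=
  φ.source ∩ φ ⁻¹' ({v | (v, 0) ∈ φ.target ∧ φ.symm (v, 0) ∈ stableDisc f ε B q} ×ˢ I) ∩ B

variable {f : M ≃ₜ M} {ε δ : ℝ} {B : Set M} {q : M}

lemma stableDisc_subset : stableDisc f ε B q ⊆ {y | ForwardClose f ε q y} ∩ B :=
  connectedComponentIn_subset _ _

lemma mem_stableDisc_self (hε : 0 ≤ ε) (hq : q ∈ B) : q ∈ stableDisc f ε B q :=
  mem_connectedComponentIn ⟨.refl hε q, hq⟩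

variable {E : Type*} [TopologicalSpace E] [Zero E]

namespace StableChart

lemma fst_mem_and_symm_mem_stableDisc {φ : OpenPartialHomeomorph M (E × ℝ)}
    (h : StableChart f ε q φ) {y : M} (hy : y ∈ stableDisc f ε B q) :
    ((φ y).1, 0) ∈ φ.target ∧ φ.symm ((φ y).1, 0) ∈ stableDisc f ε B q := by
  have hqy := (stableDisc_subset hy).1
  rw [h.symm_fst hqy, ← h.map_eq hqy]
  exact ⟨φ.map_source (h.mem_source_of_forwardClose hqy), hy⟩

lemma eventually_symm_mem {E' : Type*} [TopologicalSpace E'] [Zero E']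
    {φ : OpenPartialHomeomorph M (E × E')} (h : StableChart f ε q φ)
    (hδ : IsContractionScale f ε δ) (hε : 0 < ε) {y : M} {U : Set M} (hU : U ∈ 𝓝 y)
    (hqy : ForwardClose f ε q y) (hyδ : dist q y < δ) :
    ∀ᶠ v in 𝓝 (φ y).1, (v, (0 : E')) ∈ φ.target ∧
      φ.symm (v, 0) ∈ {y | ForwardClose f ε q y} ∩ U := by
  have hcont : ContinuousAt (fun w : E ↦ φ.symm (w, 0)) (φ y).1 :=
    (φ.continuousAt_symm (h.map_eq hqy ▸ φ.map_source (h.mem_source_of_forwardClose hqy))).comp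
      (f := fun w : E ↦ (w, (0 : E'))) (by fun_prop)
  have hmem : ∀ᶠ v in 𝓝 (φ y).1, φ.symm (v, 0) ∈ U :=
    hcont.eventually_mem (by rwa [h.symm_fst hqy])
  filter_upwards [h.eventually_forwardClose (half_lt_self hε) (hδ hqy hyδ), hmem] with v hv hvU
  exact ⟨hv.1, hv.2, hvU⟩

lemma isOpen_setOf_mem_stableDisc [LocallyConnectedSpace E] {E' : Type*} [TopologicalSpace E']
    [Zero E'] {φ : OpenPartialHomeomorph M (E × E')} (h : StableChart f ε q φ)
    (hδ : IsContractionScale f ε δ) (hε : 0 < ε) (hB : IsOpen B) (hBδ : ∀ y ∈ B, dist q y < δ) :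
    IsOpen {v : E | (v, (0 : E')) ∈ φ.target ∧ φ.symm (v, 0) ∈ stableDisc f ε B q} := by
  rw [isOpen_iff_mem_nhds]
  rintro v ⟨hv, hvD⟩
  obtain ⟨hqv, hvB⟩ := stableDisc_subset hvD
  have hnear := h.eventually_symm_mem hδ hε (hB.mem_nhds hvB) hqv (hBδ _ hvB)
  rw [φ.right_inv hv] at hnear
  obtain ⟨W, hW, hWo, hvW, hWc⟩ :=
    locallyConnectedSpace_iff_subsets_isOpen_isConnected.1 ‹_› v _ hnear
  have hWpre : IsPreconnected ((fun w : E ↦ φ.symm (w, 0)) '' W) :=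
    hWc.isPreconnected.image _ (φ.continuousOn_symm.comp (f := fun w : E ↦ (w, (0 : E')))
      (by fun_prop) fun w hw ↦ (hW hw).1)
  have hWD : (fun w : E ↦ φ.symm (w, 0)) '' W ⊆ stableDisc f ε B q :=
    (hWpre.subset_connectedComponentIn (mem_image_of_mem _ hvW)
      (image_subset_iff.2 fun w hw ↦ (hW hw).2)).trans (connectedComponentIn_eq hvD).ge
  exact mem_of_superset (hWo.mem_nhds hvW) fun w hw ↦ ⟨(hW hw).1, hWD (mem_image_of_mem _ hw)⟩

lemma isOpen_stableBox [LocallyConnectedSpace E] {φ : OpenPartialHomeomorph M (E × ℝ)}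
    (h : StableChart f ε q φ) (hδ : IsContractionScale f ε δ) (hε : 0 < ε) (hB : IsOpen B)
    (hBδ : ∀ y ∈ B, dist q y < δ) {I : Set ℝ} (hI : IsOpen I) :
    IsOpen (stableBox f ε B q φ I) :=
  (φ.isOpen_inter_preimage ((h.isOpen_setOf_mem_stableDisc hδ hε hB hBδ).prod hI)).inter hB

lemma stableDisc_union_stableBox {φ : OpenPartialHomeomorph M (E × ℝ)}
    (h : StableChart f ε q φ) :
    stableDisc f ε B q ∪ stableBox f ε B q φ (Ioi 0) ∪ stableBox f ε B q φ (Iio 0) =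
      stableBox f ε B q φ univ := by
  refine Subset.antisymm (union_subset (union_subset (fun y hy ↦ ?_) ?_) ?_) fun y hy ↦ ?_
  · exact ⟨⟨h.mem_source_of_forwardClose (stableDisc_subset hy).1,
      h.fst_mem_and_symm_mem_stableDisc hy, trivial⟩, (stableDisc_subset hy).2⟩
  · exact fun y hy ↦ ⟨⟨hy.1.1, hy.1.2.1, trivial⟩, hy.2⟩
  · exact fun y hy ↦ ⟨⟨hy.1.1, hy.1.2.1, trivial⟩, hy.2⟩
  · rcases lt_trichotomy (φ y).2 0 with hlt | h0 | hgt
    · exact Or.inr ⟨⟨hy.1.1, hy.1.2.1, hlt⟩, hy.2⟩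
    · have hyC : φ.symm ((φ y).1, 0) ∈ stableDisc f ε B q := hy.1.2.1.2
      rw [← h0, Prod.mk.eta, φ.left_inv hy.1.1] at hyC
      exact Or.inl (Or.inl hyC)
    · exact Or.inl (Or.inr ⟨⟨hy.1.1, hy.1.2.1, hgt⟩, hy.2⟩)

lemma exists_separator [LocallyPathConnectedSpace M] [LocallyConnectedSpace E]
    {φ : OpenPartialHomeomorph M (E × ℝ)} (h : StableChart f ε q φ)
    (hδ : IsContractionScale f ε δ) (hε : 0 < ε) (hB : IsOpen B) (hBs : IsSimplyConnected B)
    (hq : q ∈ B) (hBδ : ∀ y ∈ B, dist q y < δ) :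
    ∃ d : Separator B q, (∀ y ∈ d.wall, ForwardClose f ε q y) ∧
      ∀ᶠ y in 𝓝 q, ∀ b, 0 < labelSign b * (φ y).2 → y ∈ d.side b := by
  set C := stableDisc f ε B q
  have hqC : q ∈ C := mem_stableDisc_self hε.le hq
  have hbox {I : Set ℝ} (hI : IsOpen I) : IsOpen (stableBox f ε B q φ I) :=
    h.isOpen_stableBox hδ hε hB hBδ hI
  have hunion : C ∪ stableBox f ε B q φ (Ioi 0) ∪ stableBox f ε B q φ (Iio 0) =
    stableBox f ε B q φ univ := h.stableDisc_union_stableBox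
  obtain ⟨S, T, hS, hT, hST, hSTC, hnear⟩ := exists_isOpen_separation_of_isSimplyConnected hB hBs
    (fun _ hy ↦ (stableDisc_subset hy).2)
    (isClosed_preimage_connectedComponentIn (isClosed_setOf_forwardClose_right f ε q) B q)
    (hbox isOpen_Ioi) (hbox isOpen_Iio)
    (Set.disjoint_left.2 fun y hP hQ ↦ lt_asymm (mem_Ioi.1 hP.1.2.2) (mem_Iio.1 hQ.1.2.2))
    (hunion ▸ hbox isOpen_univ) hqC
  refine ⟨⟨C, fun b ↦ bif b then S else T, isPreconnected_connectedComponentIn, hqC,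
    fun _ hy ↦ (stableDisc_subset hy).2, Bool.forall_bool.2 ⟨hT, hS⟩,
    Bool.forall_bool.2 ⟨hST.symm, hST⟩, Bool.forall_bool.2 ⟨(union_comm _ _).trans hSTC, hSTC⟩⟩,
    fun y hy ↦ (stableDisc_subset hy).1, ?_⟩
  have hqbox : q ∈ stableBox f ε B q φ univ := hunion ▸ Or.inl (Or.inl hqC)
  filter_upwards [hnear, (hbox isOpen_univ).mem_nhds hqbox] with y hy hyN
  have hyC {b : Bool} (hb : 0 < labelSign b * (φ y).2) : y ∉ C := fun hyC ↦ by
    simp [h.snd_eq_zero (stableDisc_subset hyC).1] at hb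
  refine Bool.forall_bool.2 ⟨fun hb ↦ (hy (hyC hb)).2 ?_, fun hb ↦ (hy (hyC hb)).1 ?_⟩
  · exact ⟨⟨hyN.1.1, hyN.1.2.1, by simpa [labelSign] using hb⟩, hyN.2⟩
  · exact ⟨⟨hyN.1.1, hyN.1.2.1, by simpa [labelSign] using hb⟩, hyN.2⟩

end StableChart

end StableDisc

/-! ### Unstable arcs -/

section Arc

lemma exists_Icc_subset_notMem_nhds {X : Type*} [ConditionallyCompleteLinearOrder X]
    [TopologicalSpace X] [OrderTopology X] [DenselyOrdered X] [NoMaxOrder X] {G : Set X} {a : X}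
    (hG : IsClosed G) (hGb : BddAbove G) (ha : a ∈ G) : ∃ t ≥ a, Icc a t ⊆ G ∧ G ∉ 𝓝 t := by
  set T := Gᶜ ∩ Ici a
  have hTb : BddBelow T := ⟨a, fun _ hx ↦ hx.2⟩
  have hTne : T.Nonempty := by
    obtain ⟨u, hu⟩ := hGb
    obtain ⟨u', hu'⟩ := exists_gt u
    exact ⟨u', fun h ↦ hu'.not_ge (hu h), (hu ha).trans hu'.le⟩
  have hlt : Ico a (sInf T) ⊆ G := fun s hs ↦ by
    by_contra hsG
    exact notMem_of_lt_csInf hs.2 hTb ⟨hsG, hs.1⟩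
  have hat : a ≤ sInf T := le_csInf hTne fun _ hx ↦ hx.2
  refine ⟨sInf T, hat, ?_, fun hnhds ↦ ?_⟩
  · rcases hat.eq_or_lt with h | h
    · rwa [← h, Icc_self, singleton_subset_iff]
    · rw [← closure_Ico h.ne]
      exact hG.closure_subset_iff.2 hlt
  · obtain ⟨x, hxG, hxT⟩ := mem_closure_iff_nhds.1 (csInf_mem_closure hTne hTb) G hnhds
    exact hxT.1 hxG

lemma Separator.mem_side_of_continuousOn {X : Type*} [TopologicalSpace X] {B : Set X} {q : X}
    {b : Bool} (d : Separator B q) {β : ℝ → X} {s t : ℝ} (hst : s < t)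
    (hβ : ContinuousOn β (Icc s t)) (hβB : ∀ u ∈ Ioc s t, β u ∈ B \ d.wall)
    (hb : ∃ᶠ u in 𝓝[>] s, β u ∈ d.side b) : β t ∈ d.side b := by
  obtain ⟨u, hub, hu⟩ := (hb.and_eventually (Ioc_mem_nhdsGT hst)).exists
  have hsub : β '' Ioc s t ⊆ d.side b :=
    d.subset_side (isPreconnected_Ioc.image _ (hβ.mono Ioc_subset_Icc_self))
      (image_subset_iff.2 fun v hv ↦ (hβB v hv).1)
      (Set.disjoint_left.2 (forall_mem_image.2 fun v hv ↦ (hβB v hv).2)) (mem_image_of_mem _ hu) hub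
  exact hsub ⟨t, ⟨hst, le_rfl⟩, rfl⟩

variable {f : M ≃ₜ M} {α ε δ ρ : ℝ} {z q : M}

lemma StableChart.exists_branch [CompactSpace M] {E : Type*} [TopologicalSpace E] [T2Space E]
    [Zero E] {φ : OpenPartialHomeomorph M (ℝ × E)} (h : StableChart f ε q φ)
    (hδ : IsContractionScale f ε δ) (hε : 0 < ε) (hρ : 2 * ρ ≤ δ) (hq : q ∈ ball z ρ) {σ : ℝ}
    (hσ : σ ≠ 0) :
    ∃ t > 0, ∃ β : ℝ → M, ContinuousOn β (Icc 0 t) ∧ β 0 = q ∧ β t ∈ sphere z ρ ∧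
      ∀ s ∈ Icc 0 t, ForwardClose f ε q (β s) ∧ β s ∈ closedBall z ρ ∧ (φ (β s)).1 = σ * s := by
  set β : ℝ → M := fun s ↦ φ.symm (σ * s, 0)
  set K := {y | ForwardClose f ε q y} ∩ closedBall z ρ
  have hK : K ⊆ φ.source := fun _ hy ↦ h.mem_source_of_forwardClose hy.1
  have hφK : IsCompact (φ '' K) :=
    ((isClosed_setOf_forwardClose_right f ε q).inter isClosed_closedBall).isCompact
      |>.image_of_continuousOn (φ.continuousOn.mono hK)
  set G : Set ℝ := {s | (σ * s, (0 : E)) ∈ φ '' K}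
  have hG {s : ℝ} : s ∈ G ↔ (σ * s, (0 : E)) ∈ φ.target ∧ β s ∈ K :=
    Set.ext_iff.1 (φ.image_eq_target_inter_inv_preimage hK) _
  have hGb : BddAbove G :=
    ((Homeomorph.mulLeft₀ σ hσ).isCompact_preimage.2 (hφK.image continuous_fst)).bddAbove.mono
      fun s (hs : (σ * s, (0 : E)) ∈ φ '' K) ↦ mem_image_of_mem Prod.fst hs
  have h0 : (0 : ℝ) ∈ G :=
    ⟨q, ⟨.refl hε.le q, ball_subset_closedBall hq⟩, by rw [h.map_eq_zero, mul_zero]; rfl⟩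
  have hβ0 : β 0 = q := by
    simp only [β, mul_zero]
    exact h.symm_zero
  obtain ⟨t, ht, htG, hnhds⟩ :=
    exists_Icc_subset_notMem_nhds (hφK.isClosed.preimage (by fun_prop)) hGb h0
  obtain ⟨htt, hclose, hball⟩ := hG.1 (htG ⟨ht, le_rfl⟩)
  have hsphere : β t ∈ sphere z ρ := by
    by_contra hne
    have hbt : β t ∈ ball z ρ := lt_of_le_of_ne hball hne
    have hdist : dist q (β t) < δ := by
      linarith [dist_triangle_right q (β t) z, mem_ball.1 hq, mem_ball.1 hbt]
    have hopen := h.eventually_symm_mem hδ hε (isOpen_ball.mem_nhds hbt) hclose hdist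
    rw [φ.right_inv htt] at hopen
    refine hnhds (mem_of_superset ((continuous_const_mul σ).continuousAt.eventually hopen) ?_)
    exact fun s hs ↦ hG.2 ⟨hs.1, hs.2.1, ball_subset_closedBall hs.2.2⟩
  refine ⟨t, ht.lt_of_ne ?_, β, ?_, hβ0, hsphere, fun s hs ↦ ?_⟩
  · rintro rfl
    exact hq.ne (hβ0 ▸ hsphere)
  · exact φ.continuousOn_symm.comp (f := fun s : ℝ ↦ (σ * s, (0 : E))) (by fun_prop)
      fun s hs ↦ (hG.1 (htG hs)).1
  · obtain ⟨hst, hsK⟩ := hG.1 (htG hs)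
    exact ⟨hsK.1, hsK.2, by simp only [β, φ.right_inv hst]⟩

lemma StableChart.exists_arc [CompactSpace M] {E : Type*} [TopologicalSpace E] [T2Space E] [Zero E]
    {B : Set M} {ψ : OpenPartialHomeomorph M (ℝ × E)}
    (h : StableChart f.symm ε q ψ) (hexp : IsExpansive f α) (hεα : 2 * ε ≤ α) (hε : 0 < ε)
    (hδ : IsContractionScale f.symm ε δ) (hρ : 2 * ρ ≤ δ) (hq : q ∈ ball z ρ)
    (hρB : closedBall z ρ ⊆ B) (d : Separator B q) (hd : ∀ y ∈ d.wall, ForwardClose f ε q y)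
    {b : Bool} (hb : ∀ᶠ y in 𝓝 q, 0 < labelSign b * (ψ y).1 → y ∈ d.side b) :
    ∃ A : Set M, IsPreconnected A ∧ q ∈ A ∧ A ⊆ closedBall z ρ ∧
      (∀ y ∈ A, ForwardClose f.symm ε q y) ∧ ∃ e ∈ A ∩ d.side b, e ∈ sphere z ρ := by
  have hσ : labelSign b ≠ 0 ∧ labelSign b * labelSign b = 1 := by cases b <;> simp [labelSign]
  obtain ⟨t, ht, β, hβ, hβ0, htρ, hβs⟩ := h.exists_branch hδ hε hρ hq hσ.1
  have hlim : Tendsto β (𝓝[>] 0) (𝓝 q) :=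
    hβ0 ▸ ((hβ 0 (left_mem_Icc.2 ht.le)).mono_of_mem_nhdsWithin (Icc_mem_nhdsGT ht)).tendsto
  have hside : ∀ᶠ s in 𝓝[>] 0, β s ∈ d.side b := by
    filter_upwards [hlim.eventually hb, Ioc_mem_nhdsGT ht] with s hs hst
    refine hs ?_
    rw [(hβs s ⟨hst.1.le, hst.2⟩).2.2, ← mul_assoc, hσ.2, one_mul]
    exact hst.1
  have hwall : ∀ s ∈ Ioc 0 t, β s ∈ B \ d.wall := by
    refine fun s hs ↦ ⟨hρB (hβs s ⟨hs.1.le, hs.2⟩).2.1, fun hsw ↦ ?_⟩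
    obtain ⟨hsq, -, hs1⟩ := hβs s ⟨hs.1.le, hs.2⟩
    have hqs : q = β s :=
      hexp.eq_of_bracket hεα (.refl hε.le q) (hd _ hsw) (.refl hε.le q) hsq
    rw [← hqs, h.map_eq_zero, eq_comm, Prod.fst_zero] at hs1
    exact (mul_ne_zero hσ.1 hs.1.ne') hs1
  refine ⟨β '' Icc 0 t, isPreconnected_Icc.image _ hβ, ⟨0, left_mem_Icc.2 ht.le, hβ0⟩,
    image_subset_iff.2 fun s hs ↦ (hβs s hs).2.1, forall_mem_image.2 fun s hs ↦ (hβs s hs).1,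
    β t, ⟨mem_image_of_mem _ (right_mem_Icc.2 ht.le), ?_⟩, htρ⟩
  exact d.mem_side_of_continuousOn ht hβ hwall hside.frequently

/-- A separator through `q` made of points of the local stable set of `q`, together with an arc in
its local unstable set (connected, but not required to be a curve) that joins, inside
`closedBall z ρ`, points of the sphere on both sides of the wall. -/
structure SeparatingCross (f : M ≃ₜ M) (ε : ℝ) (B : Set M) (z : M) (ρ : ℝ) (q : M) extends
    Separator B q where
  forwardClose_of_mem_wall : ∀ {y}, y ∈ wall → ForwardClose f ε q y
  arc : Set M
  isPreconnected_arc : IsPreconnected arc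
  arc_subset : arc ⊆ closedBall z ρ
  backwardClose_of_mem_arc : ∀ {y}, y ∈ arc → ForwardClose f.symm ε q y
  exists_mem_arc_inter_side : ∀ b, ∃ e ∈ arc ∩ side b, e ∈ sphere z ρ

variable {E : Type*} [NormedAddCommGroup E] [NormedSpace ℝ E] {B : Set M} {l : ℕ}

lemma LinearizingChart.exists_separator [CompactSpace M] [LocallyPathConnectedSpace M]
    {φ : OpenPartialHomeomorph M (E × ℝ)} (h : LinearizingChart f l q φ)
    (hexp : IsExpansive f α) (hεα : ε ≤ α) (hε : 0 < ε) (hδ : IsContractionScale f ε δ)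
    (hB : IsOpen B) (hBs : IsSimplyConnected B) (hq : q ∈ B) (hBδ : ∀ y ∈ B, dist q y < δ) :
    ∃ (d : Separator B q) (ψ : OpenPartialHomeomorph M (ℝ × E)),
      (∀ y ∈ d.wall, ForwardClose f ε q y) ∧ StableChart f.symm ε q ψ ∧
        ∀ᶠ y in 𝓝 q, ∀ b, 0 < labelSign b * (ψ y).1 → y ∈ d.side b := by
  obtain ⟨φs, _, c, hφs, -, hc, hcφ⟩ := h.exists_stableChart hexp hεα hε
  obtain ⟨ψ, c', _, hψ, hc', -, hcψ⟩ := h.symm.exists_stableChart hexp.symm hεα hε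
  obtain ⟨d, hd, hside⟩ := hφs.exists_separator hδ hε hB hBs hq hBδ
  refine ⟨d, ψ, hd, hψ, ?_⟩
  filter_upwards [hside, hcφ, hcψ] with y hy hφy hψy b hb
  refine hy b ?_
  rw [hφy]
  rw [hψy] at hb
  simp only [smul_eq_mul, mul_left_comm _ c, mul_left_comm _ c'] at hb ⊢
  exact mul_pos hc (pos_of_mul_pos_right hb hc'.le)

lemma LinearizingChart.nonempty_separatingCross [CompactSpace M] [LocallyPathConnectedSpace M]
    {φ : OpenPartialHomeomorph M (E × ℝ)} (h : LinearizingChart f l q φ)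
    (hexp : IsExpansive f α) (hεα : 2 * ε ≤ α) (hε : 0 < ε) (hδ : IsContractionScale f ε δ)
    (hδ' : IsContractionScale f.symm ε δ) (hB : IsOpen B) (hBs : IsSimplyConnected B)
    (hBδ : ∀ x ∈ B, ∀ y ∈ B, dist x y < δ) (hρB : closedBall z ρ ⊆ B) (hρ : 2 * ρ ≤ δ)
    (hq : q ∈ ball z ρ) : Nonempty (SeparatingCross f ε B z ρ q) := by
  have hqB : q ∈ B := hρB (ball_subset_closedBall hq)
  obtain ⟨d, ψ, hd, hψ, hside⟩ :=
    h.exists_separator hexp (by linarith) hε hδ hB hBs hqB (hBδ q hqB)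
  choose A hA hqA hAρ hAq hAe using fun b ↦ hψ.exists_arc hexp hεα hε hδ' hρ hq hρB d hd
    (hside.mono fun _ hy ↦ hy b)
  exact ⟨{
    toSeparator := d
    forwardClose_of_mem_wall := hd _
    arc := ⋃ b, A b
    isPreconnected_arc := isPreconnected_iUnion ⟨q, mem_iInter.2 hqA⟩ hA
    arc_subset := iUnion_subset hAρ
    backwardClose_of_mem_arc := fun hy ↦ (mem_iUnion.1 hy).elim fun b ↦ hAq b _
    exists_mem_arc_inter_side := fun b ↦
      (hAe b).imp fun _ he ↦ ⟨⟨mem_iUnion_of_mem b he.1.1, he.1.2⟩, he.2⟩ }⟩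

end Arc

/-! ### Brackets and markers -/

section Bracket

variable {f : M ≃ₜ M} {α ε : ℝ} {x y w q r : M} {B W : Set M}

lemma ForwardClose.symm_of_mem_periodicPts (h : ForwardClose f ε q r)
    (hq : q ∈ Function.periodicPts f) (hr : r ∈ Function.periodicPts f) :
    ForwardClose f.symm ε q r := by
  obtain ⟨l, hl, hlq⟩ := hq
  obtain ⟨l', hl', hlr⟩ := hr
  intro k
  have hk : k ≤ l * l' * k := Nat.le_mul_of_pos_left k (Nat.mul_pos hl hl')
  have hiter {p : M} (hp : Function.IsPeriodicPt f (l * l' * k) p) :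
      f.symm^[k] p = f^[l * l' * k - k] p := by
    conv_lhs => rw [← hp.eq, ← Nat.add_sub_cancel' hk, Function.iterate_add_apply]
    exact symm_iterate_iterate f k _
  rw [hiter ((hlq.mul_const l').mul_const k), hiter ((hlr.const_mul l).mul_const k)]
  exact h _

lemma isClosed_setOf_exists_bracket [CompactSpace M] (f : M ≃ₜ M) (ε : ℝ) {K : Set M}
    (hK : IsClosed K) :
    IsClosed {p : M × M | ∃ w ∈ K, ForwardClose f.symm ε p.1 w ∧ ForwardClose f ε p.2 w} := by
  have hclosed : IsClosed {p : (M × M) × M | p.2 ∈ K ∧ ForwardClose f.symm ε p.1.1 p.2 ∧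
      ForwardClose f ε p.1.2 p.2} :=
    (hK.preimage continuous_snd).inter
      (((isClosed_setOf_forwardClose f.symm ε).preimage
        (f := fun p : (M × M) × M ↦ (p.1.1, p.2)) (by fun_prop)).inter
      ((isClosed_setOf_forwardClose f ε).preimage
        (f := fun p : (M × M) × M ↦ (p.1.2, p.2)) (by fun_prop)))
  convert isClosedMap_fst_of_compactSpace _ hclosed using 1
  ext p
  exact ⟨fun ⟨w, hw⟩ ↦ ⟨(p, w), hw, rfl⟩, fun ⟨⟨_, w⟩, hw, hp⟩ ↦ hp ▸ ⟨w, hw⟩⟩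

lemma IsExpansive.eventually_bracket_mem [CompactSpace M] (hexp : IsExpansive f α)
    (hε : 2 * ε ≤ α) (hx : ForwardClose f.symm ε x w) (hy : ForwardClose f ε y w)
    (hW : W ∈ 𝓝 w) :
    ∀ᶠ p in 𝓝 (x, y), ∀ w', ForwardClose f.symm ε p.1 w' → ForwardClose f ε p.2 w' →
      w' ∈ W := by
  have hclosed := isClosed_setOf_exists_bracket f ε (K := (interior W)ᶜ)
    isOpen_interior.isClosed_compl
  have hnot : (x, y) ∉ {p : M × M | ∃ w ∈ (interior W)ᶜ, ForwardClose f.symm ε p.1 w ∧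
      ForwardClose f ε p.2 w} := by
    rintro ⟨w', hw', hxw', hyw'⟩
    exact hw' (hexp.eq_of_bracket hε hy hyw' hx hxw' ▸ mem_interior_iff_mem_nhds.2 hW)
  filter_upwards [hclosed.isOpen_compl.mem_nhds hnot] with p hp w' hpx hpy
  by_contra hw'
  exact hp ⟨w', fun hmem ↦ hw' (interior_subset hmem), hpx, hpy⟩

lemma exists_isPreconnected_not_forwardClose [LocallyConnectedSpace M]
    (h : ¬ForwardClose f ε x w) (hB : IsOpen B) (hw : w ∈ B) :
    ∃ W ∈ 𝓝 w, IsPreconnected W ∧ W ⊆ B ∧ ∀ᶠ q in 𝓝 x, ∀ y ∈ W, ¬ForwardClose f ε q y := by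
  have hmem := (isClosed_setOf_forwardClose f ε).isOpen_compl.mem_nhds (x := (x, w)) h
  rw [nhds_prod_eq] at hmem
  obtain ⟨O, hO, O', hO', hsub⟩ := Filter.mem_prod_iff.1 hmem
  obtain ⟨W, hW, hWo, hwW, hWc⟩ := locallyConnectedSpace_iff_subsets_isOpen_isConnected.1
    ‹_› w (O' ∩ B) (inter_mem hO' (hB.mem_nhds hw))
  exact ⟨W, hWo.mem_nhds hwW, hWc.isPreconnected, fun y hy ↦ (hW hy).2,
    mem_of_superset hO fun q hq y hy ↦ hsub (mk_mem_prod hq (hW hy).1)⟩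

/-- A connected subset `W` of `B` that contains the whole bracket of `p.1` and `p.2`, i.e. the
intersection of the local unstable set of `p.1` with the local stable set of `p.2`, and misses the
local stable set of `p.1`. -/
structure IsBracketTrap (f : M ≃ₜ M) (ε : ℝ) (B W : Set M) (p : M × M) : Prop where
  isPreconnected : IsPreconnected W
  subset : W ⊆ B
  mem : ∀ {w}, ForwardClose f.symm ε p.1 w → ForwardClose f ε p.2 w → w ∈ W
  not_forwardClose : ∀ w ∈ W, ¬ForwardClose f ε p.1 w

lemma IsExpansive.exists_isBracketTrap [CompactSpace M] [LocallyConnectedSpace M]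
    (hexp : IsExpansive f α) (hεα : 2 * ε ≤ α) (hε : 0 ≤ ε) (hB : IsOpen B) (hw : w ∈ B)
    (hx : ForwardClose f.symm ε x w) (hy : ForwardClose f ε y w) (hxy : ¬ForwardClose f ε x y) :
    ∃ W, ∀ᶠ p in 𝓝 (x, y), IsBracketTrap f ε B W p := by
  have hxw : ¬ForwardClose f ε x w := fun h ↦ by
    obtain rfl := hexp.eq_of_bracket hεα (.refl hε x) h (.refl hε x) hx
    exact hxy hy.symm
  obtain ⟨W, hW, hWc, hWB, hWx⟩ := exists_isPreconnected_not_forwardClose hxw hB hw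
  have hWx' : ∀ᶠ p : M × M in 𝓝 (x, y), ∀ w ∈ W, ¬ForwardClose f ε p.1 w :=
    (continuous_fst.tendsto (x, y)).eventually hWx
  exact ⟨W, ((hexp.eventually_bracket_mem hεα hx hy hW).and hWx').mono fun p hp ↦
    ⟨hWc, hWB, hp.1 _, hp.2⟩⟩

end Bracket

section MarkerFamily

/-- A family of connected subsets of `B` that miss the local stable sets of all points of `O`, but
contain all the points of `sphere z ρ` on the local unstable sets of these points. -/
structure IsMarkerFamily {ι : Type*} (f : M ≃ₜ M) (ε : ℝ) (B : Set M) (z : M) (ρ : ℝ)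
    (O : Set M) (V : ι → Set M) : Prop where
  nonempty : ∀ j, (V j).Nonempty
  isPreconnected : ∀ j, IsPreconnected (V j)
  subset : ∀ j, V j ⊆ B
  not_forwardClose : ∀ q ∈ O, ∀ j, ∀ y ∈ V j, ¬ForwardClose f ε q y
  exists_mem : ∀ q ∈ O, ∀ e ∈ sphere z ρ, ForwardClose f.symm ε q e → ∃ j, e ∈ V j

variable {f : M ≃ₜ M} {α ε ρ : ℝ} {B : Set M} {z : M}

lemma eventually_forwardClose_mem [CompactSpace M] {K U : Set M} (hK : IsClosed K)
    (hU : IsOpen U) (h : ∀ e ∈ K, ForwardClose f ε z e → e ∈ U) :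
    ∀ᶠ q in 𝓝 z, ∀ e ∈ K, ForwardClose f ε q e → e ∈ U := by
  have hclosed : IsClosed (Prod.fst '' {p : M × M | p.2 ∈ K \ U ∧ ForwardClose f ε p.1 p.2}) :=
    isClosedMap_fst_of_compactSpace _
      (((hK.sdiff hU).preimage continuous_snd).inter (isClosed_setOf_forwardClose f ε))
  have hz : z ∉ Prod.fst '' {p : M × M | p.2 ∈ K \ U ∧ ForwardClose f ε p.1 p.2} := by
    rintro ⟨⟨_, e⟩, ⟨heK, hze⟩, rfl⟩
    exact heK.2 (h e heK.1 hze)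
  filter_upwards [hclosed.isOpen_compl.mem_nhds hz] with q hq e heK hqe
  by_contra heU
  exact hq ⟨(q, e), ⟨⟨heK, heU⟩, hqe⟩, rfl⟩

lemma IsExpansive.exists_isMarkerFamily [CompactSpace M] [LocallyConnectedSpace M]
    (hexp : IsExpansive f α) (hεα : 2 * ε ≤ α) (hε : 0 ≤ ε) (hB : IsOpen B) (hρ : 0 < ρ)
    (hρB : closedBall z ρ ⊆ B) :
    ∃ (t : Finset M) (V : t → Set M) (O : Set M), IsOpen O ∧ z ∈ O ∧ O ⊆ ball z ρ ∧
      IsMarkerFamily f ε B z ρ O V := by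
  set K := sphere z ρ ∩ {e | ForwardClose f.symm ε z e}
  have hK : IsClosed K := isClosed_sphere.inter (isClosed_setOf_forwardClose_right f.symm ε z)
  have hmarker : ∀ e ∈ K, ∃ W ∈ 𝓝 e, IsPreconnected W ∧ W ⊆ B ∧
      ∀ᶠ q in 𝓝 z, ∀ y ∈ W, ¬ForwardClose f ε q y := by
    refine fun e he ↦ exists_isPreconnected_not_forwardClose (fun hze ↦ ?_) hB
      (hρB (sphere_subset_closedBall he.1))
    exact ne_of_mem_sphere he.1 hρ.ne'
      (hexp.eq_of_bracket hεα (.refl hε z) hze (.refl hε z) he.2).symm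
  choose! V hV hVc hVB hVz using hmarker
  obtain ⟨t, htK, ht⟩ := hK.isCompact.elim_nhds_subcover (fun e ↦ interior (V e))
    fun e he ↦ interior_mem_nhds.2 (hV e he)
  have hcover : ∀ᶠ q in 𝓝 z, ∀ e ∈ sphere z ρ, ForwardClose f.symm ε q e →
      e ∈ ⋃ j ∈ t, interior (V j) :=
    eventually_forwardClose_mem isClosed_sphere
      (isOpen_biUnion fun _ _ ↦ isOpen_interior) fun e he hze ↦ ht ⟨he, hze⟩
  have havoid : ∀ᶠ q in 𝓝 z, ∀ j ∈ t, ∀ y ∈ V j, ¬ForwardClose f ε q y :=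
    (eventually_all_finset t).2 fun j hj ↦ hVz j (htK j hj)
  obtain ⟨O, hO, hOo, hzO⟩ :=
    _root_.eventually_nhds_iff.1 ((hcover.and havoid).and (ball_mem_nhds z hρ))
  exact ⟨t, fun j ↦ V j, O, hOo, hzO, fun q hq ↦ (hO q hq).2,
    { nonempty := fun j ↦ ⟨j, mem_of_mem_nhds (hV j (htK j j.2))⟩
      isPreconnected := fun j ↦ hVc j (htK j j.2)
      subset := fun j ↦ hVB j (htK j j.2)
      not_forwardClose := fun q hq j ↦ (hO q hq).1.2 j j.2
      exists_mem := fun q hq e he hqe ↦ by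
        obtain ⟨j, hj, hej⟩ := mem_iUnion₂.1 ((hO q hq).1.1 e he hqe)
        exact ⟨⟨j, hj⟩, interior_subset hej⟩ }⟩

end MarkerFamily

/-! ### Types of periodic points -/

section SortingCross

variable {f : M ≃ₜ M} {α ε ρ : ℝ} {B O : Set M} {z x y q q' r r' : M} {ι : Type*} {V : ι → Set M}
  {v v' : ι → Bool} {a a' b : Bool}

/-- The same cross with the labels of the two sides exchanged. -/
def SeparatingCross.swap (d : SeparatingCross f ε B z ρ q) : SeparatingCross f ε B z ρ q :=
  { d with
    toSeparator := d.toSeparator.swap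
    exists_mem_arc_inter_side := fun b ↦ d.exists_mem_arc_inter_side !b }

/-- A separating cross at a periodic point of `O` whose wall has the set `V j` on its side `v j`,
for all `j`. -/
structure SortingCross (f : M ≃ₜ M) (ε : ℝ) (B : Set M) (z : M) (ρ : ℝ) (O : Set M)
    (V : ι → Set M) (v : ι → Bool) (q : M) extends SeparatingCross f ε B z ρ q where
  mem : q ∈ O
  mem_periodicPts : q ∈ Function.periodicPts f
  sorts : toSeparator.Sorts V v

/-- The set of periodic points of `O` of type `v`: those having a separating cross that sorts the
markers `V` according to `v`. -/
def typeSet (f : M ≃ₜ M) (ε : ℝ) (B : Set M) (z : M) (ρ : ℝ) (O : Set M) (V : ι → Set M)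
    (v : ι → Bool) : Set M :=
  {q | Nonempty (SortingCross f ε B z ρ O V v q)}

lemma typeSet_not_subset : typeSet f ε B z ρ O V (fun j ↦ !(v j)) ⊆ typeSet f ε B z ρ O V v := by
  rintro q ⟨d⟩
  exact ⟨{ d with
    toSeparatingCross := d.toSeparatingCross.swap
    sorts := d.sorts }⟩

lemma IsMarkerFamily.exists_mem_typeSet (hV : IsMarkerFamily f ε B z ρ O V)
    (d : SeparatingCross f ε B z ρ q) (hq : q ∈ O) (hqf : q ∈ Function.periodicPts f) :
    ∃ v, q ∈ typeSet f ε B z ρ O V v := by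
  obtain ⟨v, hv⟩ := d.exists_sorts hV.nonempty hV.isPreconnected hV.subset fun j ↦
    Set.disjoint_left.2 fun y hy hyd ↦
      hV.not_forwardClose q hq j y hy (d.forwardClose_of_mem_wall hyd)
  exact ⟨v, ⟨{ d with mem := hq, mem_periodicPts := hqf, sorts := hv }⟩⟩

namespace SortingCross

lemma disjoint_wall (d : SortingCross f ε B z ρ O V v q) (c : SortingCross f ε B z ρ O V v' r)
    (hexp : IsExpansive f α) (hεα : 2 * ε ≤ α) (hqr : q ≠ r) : Disjoint d.wall c.wall := by
  refine Set.disjoint_left.2 fun y hyd hyc ↦ hqr ?_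
  have hclose : ForwardClose f α q r := ((d.forwardClose_of_mem_wall hyd).trans
    (c.forwardClose_of_mem_wall hyc).symm).mono (by linarith)
  exact hexp.eq_of_forwardClose hclose
    (hclose.symm_of_mem_periodicPts d.mem_periodicPts c.mem_periodicPts)

lemma exists_mem_arc_and_mem_marker (d : SortingCross f ε B z ρ O V v q)
    (hV : IsMarkerFamily f ε B z ρ O V) (b : Bool) : ∃ j, v j = b ∧ (d.arc ∩ V j).Nonempty := by
  obtain ⟨e, ⟨hed, heb⟩, heρ⟩ := d.exists_mem_arc_inter_side b
  obtain ⟨j, hj⟩ := hV.exists_mem q d.mem e heρ (d.backwardClose_of_mem_arc hed)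
  exact ⟨j, d.sorts.eq_of_mem hj heb, e, hed, hj⟩

lemma arc_inter_wall_nonempty (d : SortingCross f ε B z ρ O V v q)
    (c : SortingCross f ε B z ρ O V v r) (hV : IsMarkerFamily f ε B z ρ O V)
    (hρB : closedBall z ρ ⊆ B) : (d.arc ∩ c.wall).Nonempty := by
  have hside (b : Bool) : (d.arc ∩ c.side b).Nonempty := by
    obtain ⟨j, rfl, y, hyd, hyj⟩ := d.exists_mem_arc_and_mem_marker hV b
    exact ⟨y, hyd, c.sorts j hyj⟩
  rw [← Set.not_disjoint_iff_nonempty_inter]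
  intro hdisj
  obtain ⟨y, hyd, hyc⟩ := hside true
  obtain ⟨y', hyd', hyc'⟩ := hside false
  have hsub := c.subset_side d.isPreconnected_arc (d.arc_subset.trans hρB) hdisj hyd hyc
  exact Bool.noConfusion (c.eq_of_mem_side (hsub hyd') hyc')

lemma mem_side_not (d : SortingCross f ε B z ρ O V v q) (c : SortingCross f ε B z ρ O V v r)
    (hV : IsMarkerFamily f ε B z ρ O V) (hB : IsPreconnected B)
    (hdc : Disjoint d.wall c.wall) (hr : r ∈ d.side a) : q ∈ c.side !a := by
  obtain ⟨b, hb⟩ := c.exists_mem_side (d.wall_subset d.mem_wall)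
    (hdc.notMem_of_mem_left d.mem_wall)
  obtain ⟨j, hj, -⟩ := d.exists_mem_arc_and_mem_marker hV !a
  rwa [← hj, d.sorts.eq_of_eq_not c.sorts hB hV.nonempty hdc hr hb hj]

end SortingCross

lemma exists_bracket_of_mem_closure_typeSet [CompactSpace M] (hV : IsMarkerFamily f ε B z ρ O V)
    (hρB : closedBall z ρ ⊆ B) (hx : x ∈ closure (typeSet f ε B z ρ O V v))
    (hy : y ∈ closure (typeSet f ε B z ρ O V v)) :
    ∃ w ∈ closedBall z ρ, ForwardClose f.symm ε x w ∧ ForwardClose f ε y w := by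
  have hxy : (x, y) ∈ closure (typeSet f ε B z ρ O V v ×ˢ typeSet f ε B z ρ O V v) := by
    rw [closure_prod_eq]
    exact ⟨hx, hy⟩
  refine closure_minimal ?_ (isClosed_setOf_exists_bracket f ε isClosed_closedBall) hxy
  rintro ⟨q, r⟩ ⟨⟨d⟩, ⟨c⟩⟩
  obtain ⟨w, hwd, hwc⟩ := d.arc_inter_wall_nonempty c hV hρB
  exact ⟨w, d.arc_subset hwd, d.backwardClose_of_mem_arc hwd, c.forwardClose_of_mem_wall hwc⟩

namespace IsBracketTrap

variable {N N' U W : Set M}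

lemma ne {p : M × M} (h : IsBracketTrap f ε B W p) (hε : 0 ≤ ε) : p.1 ≠ p.2 := fun hp ↦
  h.not_forwardClose p.1 (h.mem (.refl hε _) (hp ▸ .refl hε _)) (.refl hε _)

lemma isBridge (hW : IsBracketTrap f ε B W (q, r)) (hW' : IsBracketTrap f ε B W (q', r'))
    (hV : IsMarkerFamily f ε B z ρ O V) (hρB : closedBall z ρ ⊆ B)
    (d : SortingCross f ε B z ρ O V v q) (c : SortingCross f ε B z ρ O V v r)
    (d' : SortingCross f ε B z ρ O V v' q') (c' : SortingCross f ε B z ρ O V v' r') :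
    IsBridge B W d.wall c.wall c'.wall where
  isPreconnected := hW.isPreconnected
  subset := hW.subset
  disjoint := Set.disjoint_left.2 fun w hw hwd ↦
    hW.not_forwardClose w hw (d.forwardClose_of_mem_wall hwd)
  left_nonempty := by
    obtain ⟨w, hwd, hwc⟩ := d.arc_inter_wall_nonempty c hV hρB
    exact ⟨w, hW.mem (d.backwardClose_of_mem_arc hwd) (c.forwardClose_of_mem_wall hwc), hwc⟩
  right_nonempty := by
    obtain ⟨w, hwd, hwc⟩ := d'.arc_inter_wall_nonempty c' hV hρB
    exact ⟨w, hW'.mem (d'.backwardClose_of_mem_arc hwd) (c'.forwardClose_of_mem_wall hwc), hwc⟩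

lemma eq_not_of_eq_not (hexp : IsExpansive f α) (hεα : 2 * ε ≤ α) (hε : 0 ≤ ε)
    (hB : IsPreconnected B) (hV : IsMarkerFamily f ε B z ρ O V) (hρB : closedBall z ρ ⊆ B)
    (hWU : ∀ q ∈ N, ∀ r ∈ N', IsBracketTrap f ε B W (q, r) ∧ IsBracketTrap f ε B U (r, q))
    (hq : q ∈ N) (hr : r ∈ N') (hq' : q' ∈ N) (hr' : r' ∈ N')
    (d : SortingCross f ε B z ρ O V v q) (c : SortingCross f ε B z ρ O V v r)
    (d' : SortingCross f ε B z ρ O V v' q') (c' : SortingCross f ε B z ρ O V v' r')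
    (hrd : r ∈ d.side a) (hrd' : r' ∈ d'.side a') {j : ι} (hj : v j = !a) : v' j = !a' := by
  have hdisj {q r : M} {v v' : ι → Bool} (d : SortingCross f ε B z ρ O V v q)
      (c : SortingCross f ε B z ρ O V v' r) (hq : q ∈ N) (hr : r ∈ N') :
      Disjoint d.wall c.wall :=
    d.disjoint_wall c hexp hεα ((hWU q hq r hr).1.ne hε)
  obtain ⟨hWqr, hUqr⟩ := hWU q hq r hr
  obtain ⟨hWqr', hUqr'⟩ := hWU q' hq' r' hr'
  exact d.sorts.eq_not_of_isBridge c'.sorts hB hV.nonempty (hdisj d c hq hr) (hdisj d c' hq hr')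
    (hdisj d' c' hq' hr') (hWqr.isBridge hWqr' hV hρB d c d' c')
    (hUqr'.isBridge hUqr hV hρB c' d' c d) hrd
    (d'.mem_side_not c' hV hB (hdisj d' c' hq' hr') hrd') hj

end IsBracketTrap

lemma IsExpansive.forwardClose_of_mem_closure_typeSet [CompactSpace M] [LocallyConnectedSpace M]
    (hexp : IsExpansive f α) (hεα : 2 * ε ≤ α) (hε : 0 ≤ ε) (hBo : IsOpen B)
    (hB : IsPreconnected B) (hV : IsMarkerFamily f ε B z ρ O V) (hρB : closedBall z ρ ⊆ B)
    (hvv' : v ≠ v') (hvv'' : v ≠ fun j ↦ !(v' j))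
    (hx : x ∈ closure (typeSet f ε B z ρ O V v) ∩ closure (typeSet f ε B z ρ O V v'))
    (hy : y ∈ closure (typeSet f ε B z ρ O V v) ∩ closure (typeSet f ε B z ρ O V v')) :
    ForwardClose f ε x y := by
  by_contra hxy
  obtain ⟨w, hwB, hxw, hyw⟩ := exists_bracket_of_mem_closure_typeSet hV hρB hx.1 hy.1
  obtain ⟨u, huB, hyu, hxu⟩ := exists_bracket_of_mem_closure_typeSet hV hρB hy.1 hx.1
  obtain ⟨W, hW⟩ := hexp.exists_isBracketTrap hεα hε hBo (hρB hwB) hxw hyw hxy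
  obtain ⟨U, hU⟩ := hexp.exists_isBracketTrap hεα hε hBo (hρB huB) hyu hxu fun h ↦ hxy h.symm
  obtain ⟨N, hN, N', hN', hsub⟩ := mem_nhds_prod_iff.1
    (hW.and ((continuous_swap.tendsto (x, y)).eventually hU))
  have hWU : ∀ q ∈ N, ∀ r ∈ N', IsBracketTrap f ε B W (q, r) ∧ IsBracketTrap f ε B U (r, q) :=
    fun q hq r hr ↦ hsub (mk_mem_prod hq hr)
  obtain ⟨q, hq, ⟨d⟩⟩ := mem_closure_iff_nhds.1 hx.1 N hN
  obtain ⟨r, hr, ⟨c⟩⟩ := mem_closure_iff_nhds.1 hy.1 N' hN'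
  obtain ⟨q', hq', ⟨d'⟩⟩ := mem_closure_iff_nhds.1 hx.2 N hN
  obtain ⟨r', hr', ⟨c'⟩⟩ := mem_closure_iff_nhds.1 hy.2 N' hN'
  have hside {q r : M} {v : ι → Bool} (d : SortingCross f ε B z ρ O V v q)
      (c : SortingCross f ε B z ρ O V v r) (hq : q ∈ N) (hr : r ∈ N') : ∃ a, r ∈ d.side a :=
    d.exists_mem_side (c.wall_subset c.mem_wall)
      ((d.disjoint_wall c hexp hεα ((hWU q hq r hr).1.ne hε)).notMem_of_mem_right c.mem_wall)
  obtain ⟨a, ha⟩ := hside d c hq hr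
  obtain ⟨a', ha'⟩ := hside d' c' hq' hr'
  have hiff (j : ι) : v j = (!a) ↔ v' j = !a' :=
    ⟨IsBracketTrap.eq_not_of_eq_not hexp hεα hε hB hV hρB hWU hq hr hq' hr' d c d' c' ha ha',
      IsBracketTrap.eq_not_of_eq_not hexp hεα hε hB hV hρB hWU hq' hr' hq hr d' c' d c ha' ha⟩
  have hbool : ∀ a a' b b' : Bool, (b = (!a) ↔ b' = !a') → b = if a = a' then b' else !b' := by
    decide
  by_cases haa' : a = a'
  · exact hvv' (funext fun j ↦ (hbool _ _ _ _ (hiff j)).trans (if_pos haa'))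
  · exact hvv'' (funext fun j ↦ (hbool _ _ _ _ (hiff j)).trans (if_neg haa'))

end SortingCross

section ProductPoint

variable {f : M ≃ₜ M} {α ε ρ : ℝ} {B O : Set M} {z x : M} {ι : Type*} {V : ι → Set M}

/-- `x` is a product point: all `p.1` and `p.2` close to `x` have a bracket, i.e. the local unstable
set of `p.1` meets the local stable set of `p.2`. -/
def IsProductPoint (f : M ≃ₜ M) (ε : ℝ) (x : M) : Prop :=
  ∀ᶠ p in 𝓝 (x, x), ∃ w, ForwardClose f.symm ε p.1 w ∧ ForwardClose f ε p.2 w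

lemma IsMarkerFamily.isProductPoint_of_eventually [CompactSpace M]
    (hV : IsMarkerFamily f ε B z ρ O V) (hρB : closedBall z ρ ⊆ B) {v : ι → Bool}
    (hx : ∀ᶠ q in 𝓝 x, q ∈ closure (typeSet f ε B z ρ O V v)) : IsProductPoint f ε x := by
  rw [IsProductPoint, nhds_prod_eq]
  filter_upwards [hx.prod_mk hx] with p hp
  obtain ⟨w, -, hw⟩ := exists_bracket_of_mem_closure_typeSet hV hρB hp.1 hp.2
  exact ⟨w, hw⟩

lemma IsMarkerFamily.exists_finite_cover [CompactSpace M] [LocallyConnectedSpace M] [Finite ι]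
    (hV : IsMarkerFamily f ε B z ρ O V) (hexp : IsExpansive f α) (hεα : 2 * ε ≤ α) (hε : 0 ≤ ε)
    (hBo : IsOpen B) (hB : IsPreconnected B) (hρB : closedBall z ρ ⊆ B) (hO : IsOpen O)
    (hdense : O ⊆ closure (⋃ v, typeSet f ε B z ρ O V v)) :
    ∃ F : Set (Set M), F.Finite ∧ (∀ A ∈ F, ∀ x ∈ A, ∀ y ∈ A, ForwardClose f ε x y) ∧
      ∀ x ∈ O, ¬IsProductPoint f ε x → x ∈ ⋃₀ F := by
  set T := typeSet f ε B z ρ O V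
  rw [closure_iUnion_of_finite] at hdense
  refine ⟨(fun v : (ι → Bool) × (ι → Bool) ↦ closure (T v.1) ∩ closure (T v.2)) ''
    {v | v.1 ≠ v.2 ∧ v.1 ≠ fun j ↦ !(v.2 j)}, (toFinite _).image _, ?_, fun x hx hxp ↦ ?_⟩
  · rintro _ ⟨v, hv, rfl⟩ x hx y hy
    exact hexp.forwardClose_of_mem_closure_typeSet hεα hε hBo hB hV hρB hv.1 hv.2 hx hy
  obtain ⟨v, hxv⟩ := mem_iUnion.1 (hdense hx)
  by_contra hxF
  refine hxp (hV.isProductPoint_of_eventually hρB (v := v) ?_)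
  have hnear : ∀ᶠ q in 𝓝 x, ∀ v', x ∉ closure (T v') → q ∉ closure (T v') :=
    eventually_all.2 fun v' ↦ eventually_imp_distrib_left.2 fun hxv' ↦
      isClosed_closure.isOpen_compl.mem_nhds hxv'
  filter_upwards [hnear, hO.mem_nhds hx] with q hq hqO
  obtain ⟨v', hqv'⟩ := mem_iUnion.1 (hdense hqO)
  have hxv' : x ∈ closure (T v') := by_contra fun h ↦ hq v' h hqv'
  obtain rfl | hne := eq_or_ne v' v
  · exact hqv'
  obtain rfl : v' = fun j ↦ !(v j) := by
    by_contra hne'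
    exact hxF ⟨_, ⟨(v', v), ⟨hne, hne'⟩, rfl⟩, hxv', hxv⟩
  exact closure_mono typeSet_not_subset hqv'

end ProductPoint

/-! ### Finiteness -/

section Finiteness

variable {f : M ≃ₜ M} {α ε : ℝ} {x y z : M}

/-- The points that have a linearizing chart with stable direction `E₁` and unstable direction
`E₂`; `Per_H^r` corresponds to `E₁ = ℝ^r` and `E₂ = ℝ^{n-r}`. -/
def hyperbolicPoints (f : M ≃ₜ M) (E₁ E₂ : Type*) [NormedAddCommGroup E₁] [NormedSpace ℝ E₁]
    [NormedAddCommGroup E₂] [NormedSpace ℝ E₂] : Set M :=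
  {q | ∃ (l : ℕ) (φ : OpenPartialHomeomorph M (E₁ × E₂)), LinearizingChart f l q φ}

lemma IsExpansive.exists_isContractionScale_symm [CompactSpace M] (hexp : IsExpansive f α)
    (hε : ε ≤ α) (hε0 : 0 < ε) :
    ∃ δ > 0, IsContractionScale f ε δ ∧ IsContractionScale f.symm ε δ := by
  obtain ⟨δ₁, hδ₁, hs⟩ := hexp.exists_isContractionScale hε hε0
  obtain ⟨δ₂, hδ₂, hu⟩ := hexp.symm.exists_isContractionScale hε hε0
  exact ⟨min δ₁ δ₂, lt_min hδ₁ hδ₂, fun x y h hd ↦ hs h (hd.trans_le (min_le_left _ _)),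
    fun x y h hd ↦ hu h (hd.trans_le (min_le_right _ _))⟩

lemma IsExpansive.exists_finite_cover_nhds [CompactSpace M] [LocallySimplyConnectedSpace M]
    {E : Type*} [NormedAddCommGroup E] [NormedSpace ℝ E] (hexp : IsExpansive f α)
    (hεα : 2 * ε ≤ α) (hε : 0 < ε) (hdense : Dense (hyperbolicPoints f E ℝ)) (z : M) :
    ∃ O ∈ 𝓝 z, ∃ F : Set (Set M), F.Finite ∧
      (∀ A ∈ F, ∀ x ∈ A, ∀ y ∈ A, ForwardClose f ε x y) ∧
      ∀ x ∈ O, ¬IsProductPoint f ε x → x ∈ ⋃₀ F := by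
  obtain ⟨δ, hδ, hs, hu⟩ := hexp.exists_isContractionScale_symm (by linarith) hε
  obtain ⟨B, hBball, hBo, hzB, hBs⟩ :=
    LocallySimplyConnectedSpace.exists_isSimplyConnected_subset z (ball z (δ / 2))
      (ball_mem_nhds z (half_pos hδ))
  have hBδ : ∀ x ∈ B, ∀ y ∈ B, dist x y < δ := fun x hx y hy ↦ by
    linarith [dist_triangle_right x y z, mem_ball.1 (hBball hx), mem_ball.1 (hBball hy)]
  obtain ⟨ρ, ⟨hρ, hρδ⟩, hρB⟩ : ∃ ρ, (0 < ρ ∧ ρ ≤ δ / 2) ∧ closedBall z ρ ⊆ B :=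
    (nhds_basis_closedBall.restrict fun ρ hρ ↦ ⟨min ρ (δ / 2), lt_min hρ (half_pos hδ),
      min_le_right _ _, closedBall_subset_closedBall (min_le_left _ _)⟩).mem_iff.1
      (hBo.mem_nhds hzB)
  obtain ⟨t, V, O, hO, hzO, hOρ, hV⟩ := hexp.exists_isMarkerFamily hεα hε.le hBo hρ hρB
  obtain ⟨F, hF, hclose, hcover⟩ := hV.exists_finite_cover hexp hεα hε.le hBo
    hBs.isPathConnected.isConnected.isPreconnected hρB hO
    ((hdense.open_subset_closure_inter hO).trans (closure_mono fun q hq ↦ by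
      obtain ⟨hqO, l, φ, hφ⟩ := hq
      obtain ⟨d⟩ := hφ.nonempty_separatingCross hexp hεα hε hs hu hBo hBs hBδ hρB
        (by linarith) (hOρ hqO)
      exact mem_iUnion.2
        (hV.exists_mem_typeSet d hqO ⟨l, hφ.period_pos, hφ.isPeriodicPt⟩)))
  exact ⟨O, hO.mem_nhds hzO, F, hF, hclose, hcover⟩

lemma IsExpansive.finite_of_mapsTo_symm [CompactSpace M] (hexp : IsExpansive f α) (hε : ε ≤ α)
    {S : Set M} {F : Set (Set M)} (hF : F.Finite)
    (hclose : ∀ A ∈ F, ∀ x ∈ A, ∀ y ∈ A, ForwardClose f ε x y) (hS : S ⊆ ⋃₀ F)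
    (hmaps : MapsTo f.symm S S) : S.Finite := by
  by_contra hinf
  obtain ⟨s, hsS, hcard⟩ := Set.Infinite.exists_subset_card_eq hinf (hF.toFinset.card + 1)
  have hapart : ∀ᶠ k in atTop, ∀ p ∈ s.offDiag,
      ¬ForwardClose f ε (f.symm^[k] p.1) (f.symm^[k] p.2) :=
    (eventually_all_finset _).2 fun p hp ↦ not_frequently.1 fun hfreq ↦
      (Finset.mem_offDiag.1 hp).2.2 (hexp.eq_of_frequently_forwardClose hε hfreq)
  obtain ⟨k, hk⟩ := hapart.exists
  have hcover (x : M) (hx : x ∈ S) : ∃ A ∈ F, x ∈ A := hS hx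
  choose! A hAF hA using hcover
  obtain ⟨x, hx, y, hy, hne, hxy⟩ := Finset.exists_ne_map_eq_of_card_lt_of_maps_to
    (s := s) (t := hF.toFinset) (f := fun x ↦ A (f.symm^[k] x)) (by omega)
    fun x hx ↦ hF.mem_toFinset.2 (hAF _ (hmaps.iterate k (hsS hx)))
  have hxS : f.symm^[k] x ∈ S := hmaps.iterate k (hsS hx)
  have hyA : f.symm^[k] y ∈ A (f.symm^[k] x) := by
    simpa only [hxy] using hA _ (hmaps.iterate k (hsS hy))
  exact hk (x, y) (Finset.mem_offDiag.2 ⟨hx, hy, hne⟩)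
    (hclose _ (hAF _ hxS) _ (hA _ hxS) _ hyA)

lemma IsProductPoint.eventually_exists_bracket_mem [CompactSpace M] (h : IsProductPoint f ε x)
    (hexp : IsExpansive f α) (hεα : 2 * ε ≤ α) (hε : 0 ≤ ε) {W : Set M} (hW : W ∈ 𝓝 x) :
    ∀ᶠ p in 𝓝 (x, x), ∃ w ∈ W, ForwardClose f.symm ε p.1 w ∧ ForwardClose f ε p.2 w := by
  filter_upwards [h, hexp.eventually_bracket_mem hεα (.refl hε x) (.refl hε x) hW]
    with p ⟨w, hu, hs⟩ hpW
  exact ⟨w, hpW w hu hs, hu, hs⟩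

lemma ForwardClose.of_map (h0 : dist x y ≤ ε) (h : ForwardClose f ε (f x) (f y)) :
    ForwardClose f ε x y := by
  rintro (_ | k)
  · exact h0
  · exact h k

lemma IsProductPoint.of_symm [CompactSpace M] (h : IsProductPoint f ε (f.symm x))
    (hexp : IsExpansive f α) (hεα : 2 * ε ≤ α) (hε : 0 < ε) : IsProductPoint f ε x := by
  have hW : f ⁻¹' ball x (ε / 2) ∈ 𝓝 (f.symm x) := f.continuous.continuousAt.preimage_mem_nhds
    (by simpa using ball_mem_nhds x (half_pos hε))
  have hlim : Tendsto (Prod.map f.symm f.symm) (𝓝 (x, x)) (𝓝 (f.symm x, f.symm x)) :=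
    (f.symm.continuous.prodMap f.symm.continuous).continuousAt
  filter_upwards [hlim.eventually (h.eventually_exists_bracket_mem hexp hεα hε.le hW),
    prod_mem_nhds (ball_mem_nhds x (half_pos hε)) univ_mem] with p ⟨w, hw, hu, hs⟩ hp
  refine ⟨f w, .of_map ?_ (by simpa using hu), by simpa using hs.iterate 1⟩
  linarith [dist_triangle_right p.1 (f w) x, mem_ball.1 hp.1, mem_ball.1 hw]

theorem IsExpansive.finite_setOf_not_isProductPoint [CompactSpace M]
    [LocallySimplyConnectedSpace M] {E : Type*} [NormedAddCommGroup E] [NormedSpace ℝ E]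
    (hexp : IsExpansive f α) (hεα : 2 * ε ≤ α) (hε : 0 < ε)
    (hdense : Dense (hyperbolicPoints f E ℝ)) : {x | ¬IsProductPoint f ε x}.Finite := by
  choose O hO F hF hclose hcover using hexp.exists_finite_cover_nhds hεα hε hdense
  obtain ⟨t, -, ht⟩ := isCompact_univ.elim_nhds_subcover O fun z _ ↦ hO z
  refine hexp.finite_of_mapsTo_symm (F := ⋃ z ∈ t, F z) (ε := ε) (by linarith)
    (t.finite_toSet.biUnion fun z _ ↦ hF z) ?_ (fun x hx ↦ ?_)
    fun x hx hx' ↦ hx (hx'.of_symm hexp hεα hε)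
  · simp only [mem_iUnion]
    rintro A ⟨z, -, hA⟩
    exact hclose z A hA
  · obtain ⟨z, hzt, hxO⟩ := mem_iUnion₂.1 (ht (mem_univ x))
    exact sUnion_mono (subset_biUnion_of_mem hzt) (hcover z x hxO hx)

end Finiteness

/-! ### Local product structure -/

section LocalProductStructure

variable {f : M ≃ₜ M} {α ε δ : ℝ} {q x y : M}

lemma IsExpansive.tendsto_bracket [CompactSpace M] (hexp : IsExpansive f α) (hεα : 2 * ε ≤ α)
    {ι : Type*} {l : Filter ι} {a b w : ι → M} {w₀ : M} (ha : Tendsto a l (𝓝 x))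
    (hb : Tendsto b l (𝓝 y)) (hu : ∀ i, ForwardClose f.symm ε (a i) (w i))
    (hs : ∀ i, ForwardClose f ε (b i) (w i)) (hu₀ : ForwardClose f.symm ε x w₀)
    (hs₀ : ForwardClose f ε y w₀) : Tendsto w l (𝓝 w₀) := fun _ hW ↦
  ((ha.prodMk_nhds hb).eventually (hexp.eventually_bracket_mem hεα hu₀ hs₀ hW)).mono
    fun i hi ↦ hi (w i) (hu i) (hs i)

section Bracket

variable {K₁ K₂ : Type*} {β : K₁ → M} {γ : K₂ → M} {H : K₁ × K₂ → M}

lemma IsExpansive.isEmbedding_bracket [CompactSpace M] [TopologicalSpace K₁] [TopologicalSpace K₂]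
    (hexp : IsExpansive f α) (hεα : 2 * ε ≤ α) (hβ : IsEmbedding β) (hγ : IsEmbedding γ)
    (hβq : ∀ t, ForwardClose f.symm ε q (β t)) (hγq : ∀ v, ForwardClose f ε q (γ v))
    (hu : ∀ p, ForwardClose f.symm ε (γ p.2) (H p)) (hs : ∀ p, ForwardClose f ε (β p.1) (H p)) :
    IsEmbedding H := by
  -- `β t` and `γ v` are recovered from `H (t, v)` as its brackets with `q`.
  have hcont : Continuous H := continuous_iff_continuousAt.2 fun p ↦
    hexp.tendsto_bracket hεα (hγ.continuous.comp continuous_snd).continuousAt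
      (hβ.continuous.comp continuous_fst).continuousAt hu hs (hu p) (hs p)
  have hβH (p : K₁ × K₂) : Tendsto (fun p ↦ β p.1) (comap H (𝓝 (H p))) (𝓝 (β p.1)) :=
    hexp.tendsto_bracket hεα tendsto_const_nhds tendsto_comap (fun p ↦ hβq p.1)
      (fun p ↦ (hs p).symm) (hβq p.1) (hs p).symm
  have hγH (p : K₁ × K₂) : Tendsto (fun p ↦ γ p.2) (comap H (𝓝 (H p))) (𝓝 (γ p.2)) :=
    hexp.tendsto_bracket hεα tendsto_comap tendsto_const_nhds (fun p ↦ (hu p).symm)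
      (fun p ↦ hγq p.2) (hu p).symm (hγq p.2)
  refine ⟨isInducing_iff_nhds.2 fun p ↦ le_antisymm (hcont.tendsto p).le_comap ?_,
    fun p p' hp ↦ Prod.ext (hβ.injective ?_) (hγ.injective ?_)⟩
  · rw [(hβ.prodMap hγ).isInducing.nhds_eq_comap p]
    exact ((hβH p).prodMk_nhds (hγH p)).le_comap
  · exact hexp.eq_of_bracket hεα (hs p).symm (hp ▸ (hs p').symm) (hβq _) (hβq _)
  · exact hexp.eq_of_bracket hεα (hγq _) (hγq _) (hu p).symm (hp ▸ (hu p').symm)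

lemma IsExpansive.forwardClose_iff_eq (hexp : IsExpansive f α) (hεα : 4 * ε ≤ α) (hε : 0 ≤ ε)
    (hβ : β.Injective) (hβq : ∀ t, ForwardClose f.symm ε q (β t)) {t t' : K₁}
    (hx : ForwardClose f ε (β t) x) (hy : ForwardClose f ε (β t') y) :
    ForwardClose f (2 * ε) x y ↔ t = t' := by
  refine ⟨fun h ↦ hβ (hexp.eq_of_forwardClose ?_ ?_), ?_⟩
  · exact ((hx.trans h).trans hy.symm).mono (by linarith)
  · exact ((hβq t).symm.trans (hβq t')).mono (by linarith)
  · rintro rfl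
    exact (hx.symm.trans hy).mono (by linarith)

end Bracket

variable {E₁ E₂ : Type*} [NormedAddCommGroup E₁] [NormedSpace ℝ E₁] [NormedAddCommGroup E₂]

lemma StableChart.exists_isEmbedding {φ : OpenPartialHomeomorph M (E₁ × E₂)}
    (h : StableChart f ε q φ) (hδ : IsContractionScale f ε δ) (hε : 0 < ε)
    (hqy : ForwardClose f ε q y) (hyδ : dist q y < δ) {O : Set M} (hO : O ∈ 𝓝 y) :
    ∃ γ : E₁ → M, IsEmbedding γ ∧ γ 0 = y ∧ ∀ v, γ v ∈ O ∧ ForwardClose f ε q (γ v) := by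
  obtain ⟨s, hs, hball⟩ := Metric.mem_nhds_iff.1 (h.eventually_symm_mem hδ hε hO hqy hyδ)
  let e := OpenPartialHomeomorph.univBall (φ y).1 s
  have he (v : E₁) : e v ∈ ball (φ y).1 s := by
    rw [← OpenPartialHomeomorph.univBall_target _ hs]
    exact e.map_source (by simp [e])
  have hplane : IsEmbedding fun v ↦ (e v, (0 : E₂)) :=
    (isEmbedding_prodMkLeft 0).comp
      (e.isOpenEmbedding (OpenPartialHomeomorph.univBall_source _ _)).isEmbedding
  refine ⟨fun v ↦ φ.symm (e v, 0), ?_, ?_, fun v ↦ (hball (he v)).2.symm⟩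
  · exact φ.symm.isOpenEmbedding_restrict.isEmbedding.comp
      (hplane.codRestrict φ.target fun v ↦ (hball (he v)).1)
  · simp only [e, OpenPartialHomeomorph.univBall_apply_zero, h.symm_fst hqy]

lemma IsProductPoint.exists_mem_nhds_bracket [CompactSpace M] (hx : IsProductPoint f ε x)
    (hexp : IsExpansive f α) (hεα : 2 * ε ≤ α) (hε : 0 ≤ ε) {W : Set M} (hW : W ∈ 𝓝 x) :
    ∃ A ∈ 𝓝 x, ∀ y ∈ A, ∀ z ∈ A, ∃ w ∈ W, ForwardClose f.symm ε y w ∧ ForwardClose f ε z w := by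
  have hnear := hx.eventually_exists_bracket_mem hexp hεα hε hW
  rw [nhds_prod_eq] at hnear
  obtain ⟨A, hA, hAW⟩ := (basis_sets (𝓝 x)).prod_self.eventually_iff.1 hnear
  exact ⟨A, hA, fun y hy z hz ↦ hAW (mk_mem_prod hy hz)⟩

variable [NormedSpace ℝ E₂]

lemma IsProductPoint.exists_isEmbedding [CompactSpace M] (hx : IsProductPoint f ε x)
    (hexp : IsExpansive f α) (hεα : 4 * ε ≤ α) (hε : 0 < ε)
    (hdense : Dense (hyperbolicPoints f E₁ E₂)) :
    ∃ H : E₂ × E₁ → M, IsEmbedding H ∧ x ∈ range H ∧ ∀ p p',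
      (ForwardClose f (2 * ε) (H p) (H p') ↔ p.1 = p'.1) ∧
      (ForwardClose f.symm (2 * ε) (H p) (H p') ↔ p.2 = p'.2) := by
  obtain ⟨δ, hδ, hδs, hδu⟩ := hexp.exists_isContractionScale_symm (by linarith) hε
  have hεα' : 2 * ε ≤ α := by linarith
  obtain ⟨A, hA, hbracket⟩ := hx.exists_mem_nhds_bracket hexp hεα' hε.le univ_mem
  obtain ⟨A', hA', hbracket'⟩ := hx.exists_mem_nhds_bracket hexp hεα' hε.le
    (inter_mem (interior_mem_nhds.2 hA) (ball_mem_nhds x (half_pos hδ)))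
  obtain ⟨q, ⟨l, φ, hφ⟩, hqA', hqx⟩ :=
    hdense.inter_nhds_nonempty (inter_mem hA' (ball_mem_nhds x (half_pos hδ)))
  obtain ⟨u, ⟨huA, hux⟩, hqu, hxu⟩ := hbracket' q hqA' x (mem_of_mem_nhds hA')
  obtain ⟨s, ⟨hsA, hsx⟩, hxs, hqs⟩ := hbracket' x (mem_of_mem_nhds hA') q hqA'
  have hdist {w : M} (hw : w ∈ ball x (δ / 2)) : dist q w < δ := by
    linarith [dist_triangle_right q w x, mem_ball.1 hw, mem_ball.1 hqx]
  obtain ⟨_, _, _, hφs, -⟩ := hφ.exists_stableChart hexp (by linarith) hε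
  obtain ⟨_, _, _, hφu, -⟩ := hφ.symm.exists_stableChart hexp.symm (by linarith) hε
  obtain ⟨γ, hγ, hγ0, hγq⟩ :=
    hφs.exists_isEmbedding hδs hε hqs (hdist hsx) (mem_interior_iff_mem_nhds.1 hsA)
  obtain ⟨β, hβ, hβ0, hβq⟩ :=
    hφu.exists_isEmbedding hδu hε hqu (hdist hux) (mem_interior_iff_mem_nhds.1 huA)
  choose H _ hHu hHs using fun p : E₂ × E₁ ↦ hbracket (γ p.2) (hγq p.2).1 (β p.1) (hβq p.1).1
  refine ⟨H, hexp.isEmbedding_bracket hεα' hβ hγ (fun t ↦ (hβq t).2) (fun v ↦ (hγq v).2)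
    hHu hHs, ⟨0, ?_⟩, fun p p' ↦ ⟨?_, ?_⟩⟩
  · exact hexp.eq_of_bracket hεα' (hβ0 ▸ hHs 0) hxu.symm (hγ0 ▸ hHu 0) hxs.symm
  · exact hexp.forwardClose_iff_eq hεα hε.le hβ.injective (fun t ↦ (hβq t).2) (hHs p) (hHs p')
  · exact hexp.symm.forwardClose_iff_eq hεα hε.le hγ.injective (fun v ↦ (hγq v).2)
      (hHu p) (hHu p')

lemma IsProductPoint.admitsLPS [CompactSpace M] (hx : IsProductPoint f ε x)
    (hexp : IsExpansive f α) (hεα : 4 * ε ≤ α) (hε : 0 < ε) {n k : ℕ}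
    (hdense : Dense (hyperbolicPoints f (Fin (n - k) → ℝ) (Fin k → ℝ))) : AdmitsLPS f n x := by
  obtain ⟨H, hH, hxH, hiff⟩ := hx.exists_isEmbedding hexp hεα hε hdense
  refine ⟨k, H, 2 * ε, by positivity, hH, hxH, fun t v ↦ ?_⟩
  rw [inter_comm _ (range H), inter_comm _ (range H), ← image_preimage_eq_range_inter,
    ← image_preimage_eq_range_inter]
  constructor <;> congr 1 <;> ext p
  · simp [mem_WsLoc_iff, hiff, eq_comm]
  · simp [mem_WuLoc_iff, hiff, eq_comm]

end LocalProductStructure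

section HyperbolicPoints

variable {f : M ≃ₜ M} {E₁ E₂ E₁' E₂' : Type*} [NormedAddCommGroup E₁] [NormedSpace ℝ E₁]
  [NormedAddCommGroup E₂] [NormedSpace ℝ E₂] [NormedAddCommGroup E₁'] [NormedSpace ℝ E₁']
  [NormedAddCommGroup E₂'] [NormedSpace ℝ E₂']

lemma LinearizingChart.prodCongr {l : ℕ} {q : M} {φ : OpenPartialHomeomorph M (E₁ × E₂)}
    (h : LinearizingChart f l q φ) (e₁ : E₁ ≃L[ℝ] E₁') (e₂ : E₂ ≃L[ℝ] E₂') :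
    LinearizingChart f l q
      (φ.transHomeomorph (e₁.toHomeomorph.prodCongr e₂.toHomeomorph)) where
  period_pos := h.period_pos
  isPeriodicPt := h.isPeriodicPt
  mem_source := h.mem_source
  map_eq_zero := by simp [h.map_eq_zero, ← Prod.mk_zero_zero]
  map_iterate z hz hz' := by simp [h.map_iterate z hz hz']

lemma hyperbolicPoints_subset_of_equiv (e₁ : E₁ ≃L[ℝ] E₁') (e₂ : E₂ ≃L[ℝ] E₂') :
    hyperbolicPoints f E₁ E₂ ⊆ hyperbolicPoints f E₁' E₂' :=
  fun _ ⟨l, _, hφ⟩ ↦ ⟨l, _, hφ.prodCongr e₁ e₂⟩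

lemma perHr_subset_hyperbolicPoints (f : M ≃ₜ M) (n r : ℕ) :
    PerHr f n r ⊆ hyperbolicPoints f (Fin r → ℝ) (Fin (n - r) → ℝ) := by
  rintro q ⟨l, hl, hfl, U, V, h, hU, hV, -, hq, hq0, hconj⟩
  have hiter (z : M) : (f.toEquiv ^ l) z = f^[l] z := by
    rw [← Equiv.Perm.iterate_eq_pow]
    rfl
  simp only [hiter] at hfl hconj
  have : Nonempty U := ⟨⟨q, hq⟩⟩
  let ι := hU.isOpenEmbedding_subtypeVal.toOpenPartialHomeomorph ((↑) : U → M)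
  let φ : OpenPartialHomeomorph M (ModelSp n r) := ι.symm.trans
    ((hV.isOpenEmbedding_subtypeVal.comp h.isOpenEmbedding).toOpenPartialHomeomorph _)
  have hsource : φ.source = U := by simp [φ, ι]
  have hφ (z : M) (hz : z ∈ U) : φ z = h ⟨z, hz⟩ := by
    have hι : ι.symm z = ⟨z, hz⟩ := ι.left_inv (x := ⟨z, hz⟩) (by simp [ι])
    simp [φ, hι]
  refine ⟨l, φ, hl, hfl, hsource ▸ hq, (hφ q hq).trans hq0, fun z hz hz' ↦ ?_⟩
  rw [hsource] at hz hz'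
  rw [hφ _ hz, hφ _ hz', hconj z hz hz', modelL]
  ext i <;> simp [div_eq_inv_mul]

lemma isOpen_singleton_of_mem_hyperbolicPoints [Subsingleton E₁] [Subsingleton E₂] {q : M}
    (hq : q ∈ hyperbolicPoints f E₁ E₂) : IsOpen {q} := by
  obtain ⟨l, φ, hφ⟩ := hq
  have hsource : φ.source = {q} := eq_singleton_iff_unique_mem.2
    ⟨hφ.mem_source, fun y hy ↦ φ.injOn hy hφ.mem_source (Subsingleton.elim _ _)⟩
  exact hsource ▸ φ.open_source

lemma discreteTopology_of_dense_setOf_isOpen_singleton {X : Type*} [TopologicalSpace X]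
    [T1Space X] [LocallyConnectedSpace X] (h : Dense {x : X | IsOpen {x}}) :
    DiscreteTopology X := by
  refine discreteTopology_iff_isOpen_singleton.2 fun x ↦ ?_
  obtain ⟨y, hy, hyx⟩ := h.exists_mem_open isOpen_connectedComponent ⟨x, mem_connectedComponent⟩
  have hsub : connectedComponent x ⊆ {y} :=
    isPreconnected_connectedComponent.subset_isClopen ⟨isClosed_singleton, hy⟩ ⟨y, hyx, rfl⟩
  exact mem_singleton_iff.1 (hsub mem_connectedComponent) ▸ hy

end HyperbolicPoints

theorem stmt18_general {M : Type*} [MetricSpace M] [CompactSpace M]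
    [LocallySimplyConnectedSpace M] (n : ℕ) (f : M ≃ₜ M) (α : ℝ) (hα : 0 < α)
    (hexp : IsExpansive f α) (hdense : closure (PerHr f n (n - 1)) = Set.univ) :
    {p : M | ¬AdmitsLPS f n p}.Finite := by
  have hd : Dense (hyperbolicPoints f (Fin (n - 1) → ℝ) (Fin (n - (n - 1)) → ℝ)) :=
    (dense_iff_closure_eq.2 hdense).mono (perHr_subset_hyperbolicPoints f n (n - 1))
  rcases n.eq_zero_or_pos with rfl | hn
  · have := discreteTopology_of_dense_setOf_isOpen_singleton
      (hd.mono fun _ hq ↦ isOpen_singleton_of_mem_hyperbolicPoints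
        (E₁ := Fin 0 → ℝ) (E₂ := Fin 0 → ℝ) hq)
    have := finite_of_compact_of_discrete (X := M)
    exact toFinite _
  have hdim {E : Type} [NormedAddCommGroup E] [NormedSpace ℝ E] [FiniteDimensional ℝ E]
      (hE : Module.finrank ℝ E = 1) : Dense (hyperbolicPoints f (Fin (n - 1) → ℝ) E) :=
    hd.mono (hyperbolicPoints_subset_of_equiv (.refl ℝ _)
      (.ofFinrankEq (by rw [hE, Module.finrank_fin_fun]; omega)))
  refine (hexp.finite_setOf_not_isProductPoint (ε := α / 4) (by linarith) (by linarith)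
    (hdim (Module.finrank_self ℝ))).subset fun x hx hxp ↦ hx ?_
  exact hxp.admitsLPS hexp (by linarith) (by linarith) (k := 1) (hdim (by simp))

/-- **Lemma (finitely many singularities).** If `f` is an expansive homeomorphism of a
compact connected boundaryless `n`-manifold with `Per_H^{n-1}` dense, then the set of
singularities (points with no local product structure) is finite. -/
theorem stmt18 {M : Type*} [MetricSpace M] [CompactSpace M] [ConnectedSpace M]
    (n : ℕ) [ChartedSpace (EuclideanSpace ℝ (Fin n)) M]
    (f : M ≃ₜ M) (α : ℝ) (hα : 0 < α) (hexp : IsExpansive f α)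
    (hdense : closure (PerHr f n (n - 1)) = Set.univ) :
    {p : M | ¬ AdmitsLPS f n p}.Finite := by
  have := locallySimplyConnectedSpace_of_chartedSpace (EuclideanSpace ℝ (Fin n)) M
  exact stmt18_general n f α hα hexp hdense
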